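/- arXiv:2110.10663 — 4 statements merged into one kernel-verified Lean document; each statement's English description precedes it below -/
import Mathlib

section
/- Let 𝒯 be a triangulated category and let ℐ_1, …, ℐ_m be thick full triangulated subcategories such that (i) for any j > i, Hom(K, L) = 0 for all K ∈ ℐ_j and L ∈ ℐ_i, and (ii) ⟨ℐ_1 ∪ ⋯ ∪ ℐ_m⟩_∞ = 𝒯. Then rdim 𝒯 ≤ Σ_{l=1}^m (rdim ℐ_l + 1) − 1. -/
open CategoryTheory Category Limits Pretriangulated

universe v u

namespace RouquierDim

variable {C : Type u} [Category.{v} C] [Preadditive C] [HasZeroObject C]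
  [HasShift C ℤ] [∀ n : ℤ, (shiftFunctor C n).Additive] [Pretriangulated C]
  [HasBinaryBiproducts C]

/-- `Z` is a summand of `K`: there are maps `r : Z ⟶ K`, `k : K ⟶ Z` with `r ≫ k = 𝟙 Z`. -/
def IsSummand (Z K : C) : Prop := ∃ (r : Z ⟶ K) (k : K ⟶ Z), r ≫ k = 𝟙 Z

/-- The subcategory `ℐ * 𝒥`: objects `K` admitting a distinguished triangle
`K₀ ⟶ K ⟶ K₁ ⟶ K₀⟦1⟧` with `K₀ ∈ ℐ` and `K₁ ∈ 𝒥`. -/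
def star (I J : Set C) : Set C :=
  {K | ∃ (K₀ K₁ : C) (f : K₀ ⟶ K) (g : K ⟶ K₁) (h : K₁ ⟶ K₀⟦(1 : ℤ)⟧),
    Triangle.mk f g h ∈ (distTriang C) ∧ K₀ ∈ I ∧ K₁ ∈ J}

/-- Membership in `[ℐ]`, the smallest strictly full subcategory containing `ℐ` and
closed under finite direct sums and shifts. -/
inductive bracketMem (I : Set C) : C → Prop
  | of {X : C} (hX : X ∈ I) : bracketMem I X
  | zero {X : C} (hX : IsZero X) : bracketMem I X
  | shift {X : C} (n : ℤ) (hX : bracketMem I X) : bracketMem I (X⟦n⟧)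
  | sum {X Y : C} (hX : bracketMem I X) (hY : bracketMem I Y) : bracketMem I (X ⊞ Y)
  | iso {X Y : C} (e : X ≅ Y) (hX : bracketMem I X) : bracketMem I Y

/-- `[ℐ]` as a set of objects. -/
def bracket (I : Set C) : Set C := {X | bracketMem I X}

/-- Membership in `⟨ℐ⟩`, the smallest strictly full subcategory containing `ℐ` and
closed under finite direct sums, shifts, and summands. -/
inductive angleMem (I : Set C) : C → Prop
  | of {X : C} (hX : X ∈ I) : angleMem I X
  | zero {X : C} (hX : IsZero X) : angleMem I X
  | shift {X : C} (n : ℤ) (hX : angleMem I X) : angleMem I (X⟦n⟧)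
  | sum {X Y : C} (hX : angleMem I X) (hY : angleMem I Y) : angleMem I (X ⊞ Y)
  | smd {X Y : C} (h : IsSummand X Y) (hY : angleMem I Y) : angleMem I X
  | iso {X Y : C} (e : X ≅ Y) (hX : angleMem I X) : angleMem I Y

/-- `⟨ℐ⟩` as a set of objects. -/
def angle (I : Set C) : Set C := {X | angleMem I X}

/-- `ℐ_sd`: the smallest strictly full subcategory containing all summands of objects of `ℐ`. -/
def sd (I : Set C) : Set C := {Z | ∃ K ∈ I, IsSummand Z K}

/-- `[ℐ]_n` for `n ≥ 1`: `[ℐ]_1 = [ℐ]`, `[ℐ]_{n+1} = [ℐ]_n * [ℐ]`. (Value `∅` at `n = 0`.) -/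
def bracketN (I : Set C) : ℕ → Set C
  | 0 => ∅
  | 1 => bracket I
  | (n + 2) => star (bracketN I (n + 1)) (bracket I)

/-- `⟨ℐ⟩_n` for `n ≥ 1`: `⟨ℐ⟩_1 = ⟨ℐ⟩`, `⟨ℐ⟩_{n+1} = ⟨⟨ℐ⟩_n * ⟨ℐ⟩⟩`. (Value `∅` at `n = 0`.) -/
def angleN (I : Set C) : ℕ → Set C
  | 0 => ∅
  | 1 => angle I
  | (n + 2) => angle (star (angleN I (n + 1)) (angle I))

/-- `⟨ℐ⟩_∞ = ⋃_{n ∈ ℕ} ⟨ℐ⟩_n`. -/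
def angleInf (I : Set C) : Set C := ⋃ n : ℕ, angleN I n

/-- A thick full triangulated subcategory: a strictly full subcategory containing the zero
objects, closed under shifts, extensions (hence cones), and summands. -/
structure IsThickTriangulatedSub (S : Set C) : Prop where
  zero : ∀ X : C, IsZero X → X ∈ S
  iso_closed : ∀ {X Y : C}, (X ≅ Y) → X ∈ S → Y ∈ S
  shift : ∀ (X : C) (n : ℤ), X ∈ S → X⟦n⟧ ∈ S
  ext₂ : ∀ (T : Triangle C), T ∈ (distTriang C) → T.obj₁ ∈ S → T.obj₃ ∈ S → T.obj₂ ∈ S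
  summand : ∀ {X Y : C}, IsSummand X Y → Y ∈ S → X ∈ S

/-- The Rouquier dimension of a (strictly full, thick, triangulated) subcategory `S`:
the smallest `n ∈ ℕ ∪ {∞}` such that `S = ⟨G⟩_{n+1}` for some object `G ∈ S`.
Taking `S = Set.univ` gives the Rouquier dimension of the ambient category. -/
noncomputable def relRouquierDim (S : Set C) : ℕ∞ :=
  sInf {c : ℕ∞ | ∃ n : ℕ, c = (n : ℕ∞) ∧ ∃ G ∈ S, S = angleN {G} (n + 1)}


set_option linter.unusedSectionVars false

def ShSt (Q : Set C) : Prop := ∀ (X : C) (n : ℤ), X ∈ Q → X⟦n⟧ ∈ Q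

def Loc (Q : Set C) {X Y : C} (f : X ⟶ Y) : Prop :=
  ∀ q ∈ Q, Function.Bijective (fun g : Y ⟶ q => f ≫ g)

def Col (Q : Set C) {X Y : C} (f : X ⟶ Y) : Prop :=
  ∀ q ∈ Q, Function.Bijective (fun g : q ⟶ X => g ≫ f)

def rperp (A : Set C) : Set C := {Y | ∀ X ∈ A, ∀ f : X ⟶ Y, f = 0}

lemma Loc.inj {Q : Set C} {X Y q : C} {f : X ⟶ Y} (h : Loc Q f) (hq : q ∈ Q)
    {a b : Y ⟶ q} (e : f ≫ a = f ≫ b) : a = b := (h q hq).1 e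

lemma Col.inj {Q : Set C} {X Y q : C} {f : X ⟶ Y} (h : Col Q f) (hq : q ∈ Q)
    {a b : q ⟶ X} (e : a ≫ f = b ≫ f) : a = b := (h q hq).1 e

lemma Loc.surj {Q : Set C} {X Y q : C} {f : X ⟶ Y} (h : Loc Q f) (hq : q ∈ Q)
    (a : X ⟶ q) : ∃ b : Y ⟶ q, a = f ≫ b := by
  obtain ⟨b, hb⟩ := (h q hq).2 a
  exact ⟨b, hb.symm⟩

lemma Col.surj {Q : Set C} {X Y q : C} {f : X ⟶ Y} (h : Col Q f) (hq : q ∈ Q)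
    (a : q ⟶ Y) : ∃ b : q ⟶ X, a = b ≫ f := by
  obtain ⟨b, hb⟩ := (h q hq).2 a
  exact ⟨b, hb.symm⟩

lemma Loc.mk' {Q : Set C} {X Y : C} {f : X ⟶ Y}
    (h₁ : ∀ q ∈ Q, ∀ g : Y ⟶ q, f ≫ g = 0 → g = 0)
    (h₂ : ∀ q ∈ Q, ∀ g : X ⟶ q, ∃ b : Y ⟶ q, g = f ≫ b) : Loc Q f := by
  intro q hq
  refine ⟨fun a b e => ?_, fun a => ?_⟩
  · have := h₁ q hq (a - b) (by simpa [Preadditive.comp_sub, sub_eq_zero] using e)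
    exact sub_eq_zero.1 this
  · obtain ⟨b, hb⟩ := h₂ q hq a
    exact ⟨b, hb.symm⟩

lemma Col.mk' {Q : Set C} {X Y : C} {f : X ⟶ Y}
    (h₁ : ∀ q ∈ Q, ∀ g : q ⟶ X, g ≫ f = 0 → g = 0)
    (h₂ : ∀ q ∈ Q, ∀ g : q ⟶ Y, ∃ b : q ⟶ X, g = b ≫ f) : Col Q f := by
  intro q hq
  refine ⟨fun a b e => ?_, fun a => ?_⟩
  · have := h₁ q hq (a - b) (by simpa [Preadditive.sub_comp, sub_eq_zero] using e)
    exact sub_eq_zero.1 this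
  · obtain ⟨b, hb⟩ := h₂ q hq a
    exact ⟨b, hb.symm⟩

lemma exists_shift (X : C) (n : ℤ) : Nonempty (X⟦-n⟧⟦n⟧ ≅ X) := ⟨shiftNegShift X n⟩

lemma map_eq_zero' {X Y : C} {f : X ⟶ Y} {n : ℤ} (h : f⟦n⟧' = 0) : f = 0 :=
  (shiftFunctor C n).map_injective (by rw [h, Functor.map_zero])

lemma Loc.shift {Q : Set C} (hQ : ShSt Q) {X Y : C} {f : X ⟶ Y} (h : Loc Q f) (n : ℤ) :
    Loc Q (f⟦n⟧') := by
  refine Loc.mk' ?_ ?_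
  · intro q hq g hg
    obtain ⟨e⟩ := exists_shift q n
    obtain ⟨k, hk⟩ := (shiftFunctor C n).map_surjective (g ≫ e.inv)
    have : k = 0 := by
      apply h.inj (hQ q (-n) hq)
      apply (shiftFunctor C n).map_injective
      rw [Functor.map_comp, hk, reassoc_of% hg]
      simp
    rw [← cancel_mono e.inv, ← hk, this]
    simp
  · intro q hq g
    obtain ⟨e⟩ := exists_shift q n
    obtain ⟨k, hk⟩ := (shiftFunctor C n).map_surjective (g ≫ e.inv)
    obtain ⟨l, hl⟩ := h.surj (hQ q (-n) hq) k
    refine ⟨l⟦n⟧' ≫ e.hom, ?_⟩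
    rw [← Functor.map_comp_assoc, ← hl, hk]
    simp

lemma Col.shift {Q : Set C} (hQ : ShSt Q) {X Y : C} {f : X ⟶ Y} (h : Col Q f) (n : ℤ) :
    Col Q (f⟦n⟧') := by
  refine Col.mk' ?_ ?_
  · intro q hq g hg
    obtain ⟨e⟩ := exists_shift q n
    obtain ⟨k, hk⟩ := (shiftFunctor C n).map_surjective (e.hom ≫ g)
    have : k = 0 := by
      apply h.inj (hQ q (-n) hq)
      apply (shiftFunctor C n).map_injective
      rw [Functor.map_comp, hk, assoc, hg]
      simp
    rw [← cancel_epi e.hom, ← hk, this]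
    simp
  · intro q hq g
    obtain ⟨e⟩ := exists_shift q n
    obtain ⟨k, hk⟩ := (shiftFunctor C n).map_surjective (e.hom ≫ g)
    obtain ⟨l, hl⟩ := h.surj (hQ q (-n) hq) k
    refine ⟨e.inv ≫ l⟦n⟧', ?_⟩
    rw [assoc, ← Functor.map_comp, ← hl, hk]
    simp

lemma yoneda_ex₁ {T : Triangle C} (hT : T ∈ distTriang C) {q : C} (u : T.obj₁ ⟶ q)
    (h : T.mor₃ ≫ u⟦(1 : ℤ)⟧' = 0) : ∃ v : T.obj₂ ⟶ q, u = T.mor₁ ≫ v := by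
  obtain ⟨v, hv⟩ := Triangle.yoneda_exact₃ _ (rot_of_distTriang _ hT) (u⟦(1 : ℤ)⟧') h
  change T.obj₂⟦(1 : ℤ)⟧ ⟶ q⟦(1 : ℤ)⟧ at v
  change u⟦(1 : ℤ)⟧' = (-T.mor₁⟦(1 : ℤ)⟧') ≫ v at hv
  obtain ⟨w, rfl⟩ := (shiftFunctor C (1 : ℤ)).map_surjective v
  refine ⟨-w, (shiftFunctor C (1 : ℤ)).map_injective ?_⟩
  rw [hv]
  simp

lemma loc_five {Q : Set C} (hQ : ShSt Q) {T T' : Triangle C} (φ : T ⟶ T')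
    (hT : T ∈ distTriang C) (hT' : T' ∈ distTriang C)
    (h₁ : Loc Q φ.hom₁) (h₃ : Loc Q φ.hom₃) : Loc Q φ.hom₂ := by
  refine Loc.mk' ?_ ?_
  · intro q hq g hg
    have e1 : T'.mor₁ ≫ g = 0 := by
      apply h₁.inj hq
      rw [← φ.comm₁_assoc, hg]
      simp
    obtain ⟨h, rfl⟩ := Triangle.yoneda_exact₂ _ hT' g e1
    have e2 : T.mor₂ ≫ φ.hom₃ ≫ h = 0 := by rw [φ.comm₂_assoc, hg]
    obtain ⟨k, hk⟩ := Triangle.yoneda_exact₃ _ hT _ e2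
    obtain ⟨k', rfl⟩ := (h₁.shift hQ 1).surj hq k
    rw [φ.comm₃_assoc] at hk
    rw [h₃.inj hq hk, ← assoc, comp_distTriang_mor_zero₂₃ _ hT', zero_comp]
  · intro q hq g
    obtain ⟨u, hu⟩ := h₁.surj hq (T.mor₁ ≫ g)
    have e1 : T'.mor₃ ≫ u⟦(1 : ℤ)⟧' = 0 := by
      apply h₃.inj (hQ q 1 hq)
      rw [← φ.comm₃_assoc, ← Functor.map_comp, ← hu, Functor.map_comp, ← assoc,
        comp_distTriang_mor_zero₃₁ _ hT]
      simp
    obtain ⟨v, rfl⟩ := yoneda_ex₁ hT' u e1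
    have e2 : T.mor₁ ≫ (g - φ.hom₂ ≫ v) = 0 := by
      rw [Preadditive.comp_sub, hu, φ.comm₁_assoc, sub_self]
    obtain ⟨w, hw⟩ := Triangle.yoneda_exact₂ _ hT _ e2
    obtain ⟨w', rfl⟩ := h₃.surj hq w
    refine ⟨v + T'.mor₂ ≫ w', ?_⟩
    rw [sub_eq_iff_eq_add] at hw
    rw [hw, Preadditive.comp_add, φ.comm₂_assoc, add_comm]

lemma col_five {Q : Set C} (hQ : ShSt Q) {T T' : Triangle C} (φ : T ⟶ T')
    (hT : T ∈ distTriang C) (hT' : T' ∈ distTriang C)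
    (h₁ : Col Q φ.hom₁) (h₃ : Col Q φ.hom₃) : Col Q φ.hom₂ := by
  refine Col.mk' ?_ ?_
  · intro q hq g hg
    have e1 : g ≫ T.mor₂ = 0 := by
      apply h₃.inj hq
      rw [assoc, φ.comm₂, reassoc_of% hg]
      simp
    obtain ⟨h, rfl⟩ := Triangle.coyoneda_exact₂ _ hT g e1
    have e2 : (h ≫ φ.hom₁)⟦(1 : ℤ)⟧' ≫ T'.mor₁⟦(1 : ℤ)⟧' = 0 := by
      rw [← Functor.map_comp, assoc, ← φ.comm₁, ← assoc, hg, Functor.map_zero]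
    obtain ⟨k, hk⟩ := Triangle.coyoneda_exact₁ _ hT' _ e2
    obtain ⟨k', rfl⟩ := h₃.surj (hQ q 1 hq) k
    rw [Functor.map_comp, assoc, ← φ.comm₃, ← assoc k'] at hk
    have := (h₁.shift hQ 1).inj (hQ q 1 hq) hk
    apply map_eq_zero' (n := 1)
    rw [Functor.map_comp, this, assoc, comp_distTriang_mor_zero₃₁ _ hT, comp_zero]
  · intro q hq g
    obtain ⟨u, hu⟩ := h₃.surj hq (g ≫ T'.mor₂)
    have e1 : u ≫ T.mor₃ = 0 := by
      apply (h₁.shift hQ 1).inj hq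
      rw [assoc, φ.comm₃, ← assoc, ← hu, assoc, comp_distTriang_mor_zero₂₃ _ hT']
      simp
    obtain ⟨v, rfl⟩ := Triangle.coyoneda_exact₃ _ hT u e1
    have e2 : (g - v ≫ φ.hom₂) ≫ T'.mor₂ = 0 := by
      rw [Preadditive.sub_comp, hu, assoc, assoc, φ.comm₂, sub_self]
    obtain ⟨w, hw⟩ := Triangle.coyoneda_exact₂ _ hT' _ e2
    obtain ⟨w', rfl⟩ := h₁.surj hq w
    refine ⟨v + w' ≫ T.mor₁, ?_⟩
    rw [sub_eq_iff_eq_add] at hw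
    rw [hw, Preadditive.add_comp, assoc, assoc, φ.comm₁, add_comm]

lemma rperp_shift {A : Set C} (hA : ShSt A) : ShSt (rperp A) := by
  intro Y n hY X hX f
  obtain ⟨e⟩ := exists_shift X n
  obtain ⟨k, hk⟩ := (shiftFunctor C n).map_surjective (e.hom ≫ f)
  rw [← cancel_epi e.hom, ← hk, hY _ (hA X (-n) hX) k]
  simp

/-- reflections from triangles -/
lemma loc_of_dist {A : Set C} (hA : ShSt A) {X Y Z : C} {f : X ⟶ Y} {g : Y ⟶ Z}
    {h : Z ⟶ X⟦(1 : ℤ)⟧} (hT : Triangle.mk f g h ∈ distTriang C) (hX : X ∈ A) :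
    Loc (rperp A) g := by
  refine Loc.mk' ?_ ?_
  · intro q hq k hk
    obtain ⟨l, rfl⟩ := Triangle.yoneda_exact₃ _ hT k hk
    have : l = 0 := hq _ (hA X 1 hX) l
    rw [this]
    exact comp_zero
  · intro q hq k
    exact Triangle.yoneda_exact₂ _ hT k (hq _ hX _)

lemma col_of_dist {A : Set C} (hA : ShSt A) {X Y Z : C} {f : X ⟶ Y} {g : Y ⟶ Z}
    {h : Z ⟶ X⟦(1 : ℤ)⟧} (hT : Triangle.mk f g h ∈ distTriang C) (hZ : Z ∈ rperp A) :
    Col A f := by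
  refine Col.mk' ?_ ?_
  · intro q hq k hk
    apply map_eq_zero' (n := 1)
    obtain ⟨l, hl⟩ := Triangle.coyoneda_exact₁ _ hT (k⟦(1 : ℤ)⟧') (by
      change k⟦(1 : ℤ)⟧' ≫ f⟦(1 : ℤ)⟧' = 0
      rw [← Functor.map_comp, hk, Functor.map_zero])
    have : l = 0 := hZ _ (hA q 1 hq) l
    refine hl.trans ?_
    rw [this]
    exact zero_comp
  · intro q hq k
    exact Triangle.coyoneda_exact₂ _ hT k (hZ _ hq _)

lemma rperp_of_col {A : Set C} (hA : ShSt A) {X Y Z : C} {f : X ⟶ Y} {g : Y ⟶ Z}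
    {h : Z ⟶ X⟦(1 : ℤ)⟧} (hT : Triangle.mk f g h ∈ distTriang C) (hf : Col A f) :
    Z ∈ rperp A := by
  intro a ha k
  have e1 : k ≫ h = 0 := by
    apply (hf.shift hA 1).inj ha
    rw [assoc]
    have := comp_distTriang_mor_zero₃₁ _ hT
    change h ≫ f⟦(1 : ℤ)⟧' = 0 at this
    rw [this]
    simp
  obtain ⟨l, rfl⟩ := Triangle.coyoneda_exact₃ _ hT k e1
  change a ⟶ Y at l
  obtain ⟨l', rfl⟩ := hf.surj ha l
  have := comp_distTriang_mor_zero₁₂ _ hT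
  change f ≫ g = 0 at this
  change (l' ≫ f) ≫ g = 0
  rw [assoc, this, comp_zero]

lemma loc_unique {Q : Set C} {Y W W' : C} {p : Y ⟶ W} {p' : Y ⟶ W'}
    (hp : Loc Q p) (hp' : Loc Q p') (hW : W ∈ Q) (hW' : W' ∈ Q) :
    ∃ e : W ≅ W', p ≫ e.hom = p' := by
  obtain ⟨a, ha⟩ := hp.surj hW' p'
  obtain ⟨b, hb⟩ := hp'.surj hW p
  refine ⟨⟨a, b, ?_, ?_⟩, ha.symm⟩
  · apply hp.inj hW
    rw [← assoc, ← ha, ← hb, comp_id]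
  · apply hp'.inj hW'
    rw [← assoc, ← hb, ← ha, comp_id]

lemma dist_of_loc_col {A : Set C} (hA : ShSt A) {X Y Z : C} {f : X ⟶ Y} {g : Y ⟶ Z}
    (hf : Col A f) (hg : Loc (rperp A) g) (hX : X ∈ A) (hZ : Z ∈ rperp A) :
    ∃ h : Z ⟶ X⟦(1 : ℤ)⟧, Triangle.mk f g h ∈ distTriang C := by
  obtain ⟨W, p, h, hT⟩ := distinguished_cocone_triangle f
  have hW := rperp_of_col hA hT hf
  obtain ⟨e, he⟩ := loc_unique (loc_of_dist hA hT hX) hg hW hZ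
  refine ⟨e.inv ≫ h, isomorphic_distinguished _ hT _ ?_⟩
  refine (Triangle.isoMk (Triangle.mk f p h) (Triangle.mk f g (e.inv ≫ h)) (Iso.refl _)
    (Iso.refl _) e ?_ ?_ ?_).symm
  · change f ≫ 𝟙 _ = 𝟙 _ ≫ f
    simp
  · change p ≫ e.hom = 𝟙 _ ≫ g
    simp [he]
  · change h ≫ (𝟙 X)⟦(1 : ℤ)⟧' = e.hom ≫ e.inv ≫ h
    simp

structure Tri (S : Set C) : Prop where
  zero : ∀ X : C, IsZero X → X ∈ S
  iso : ∀ {X Y : C}, (X ≅ Y) → X ∈ S → Y ∈ S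
  shift : ShSt S
  ext₂ : ∀ (T : Triangle C), T ∈ (distTriang C) → T.obj₁ ∈ S → T.obj₃ ∈ S → T.obj₂ ∈ S

lemma star_ext {A B : Set C} (hA : Tri A) (hB : Tri B) (hAB : B ⊆ rperp A)
    (T : Triangle C) (hT : T ∈ distTriang C) (h₁ : T.obj₁ ∈ star A B)
    (h₃ : T.obj₃ ∈ star A B) : T.obj₂ ∈ star A B := by
  obtain ⟨x0, x1, xf, xg, xh, hTx, hx0, hx1⟩ := h₁
  obtain ⟨z0, z1, zf, zg, zh, hTz, hz0, hz1⟩ := h₃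
  have cx := col_of_dist hA.shift hTx (hAB hx1)
  have cz := col_of_dist hA.shift hTz (hAB hz1)
  have lx := loc_of_dist hA.shift hTx hx0
  have lz := loc_of_dist hA.shift hTz hz0
  obtain ⟨u, hu⟩ := (cx.shift hA.shift 1).surj hz0 (zf ≫ T.mor₃)
  obtain ⟨c, c1, c2, hTc⟩ := distinguished_cocone_triangle₂ u
  obtain ⟨i, hi1, hi2⟩ := complete_distinguished_triangle_morphism₂ _ _ hTc hT xf zf hu.symm
  obtain ⟨v, hv⟩ := lz.surj (hAB (hB.shift _ 1 hx1)) (T.mor₃ ≫ xg⟦(1 : ℤ)⟧')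
  obtain ⟨d, d1, d2, hTd⟩ := distinguished_cocone_triangle₂ v
  obtain ⟨p, hp1, hp2⟩ := complete_distinguished_triangle_morphism₂ _ _ hT hTd xg zg hv
  have hc : c ∈ A := hA.ext₂ _ hTc hx0 hz0
  have hd : d ∈ B := hB.ext₂ _ hTd hx1 hz1
  have ci : Col A i := col_five hA.shift (T := Triangle.mk c1 c2 u) (T' := T)
    { hom₁ := xf, hom₂ := i, hom₃ := zf, comm₁ := hi1, comm₂ := hi2, comm₃ := hu.symm }
    hTc hT cx cz
  have lp : Loc (rperp A) p := loc_five (rperp_shift hA.shift) (T := T) (T' := Triangle.mk d1 d2 v)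
    { hom₁ := xg, hom₂ := p, hom₃ := zg, comm₁ := hp1, comm₂ := hp2, comm₃ := hv }
    hT hTd lx lz
  obtain ⟨h, hh⟩ := dist_of_loc_col hA.shift ci lp hc (hAB hd)
  exact ⟨_, _, _, _, _, hh, hc, hd⟩

/-- the octahedral axiom in the orthogonal situation -/
lemma octa {A : Set C} (hA : Tri A) {a Y b b1 b2 : C} {f : a ⟶ Y} {g : Y ⟶ b}
    {h : b ⟶ a⟦(1 : ℤ)⟧} {f' : b1 ⟶ b} {g' : b ⟶ b2} {h' : b2 ⟶ b1⟦(1 : ℤ)⟧}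
    (hT : Triangle.mk f g h ∈ distTriang C) (hT' : Triangle.mk f' g' h' ∈ distTriang C)
    (ha : a ∈ A) (hb : b ∈ rperp A) (hb1 : b1 ∈ rperp A) (hb2 : b2 ∈ rperp A) :
    ∃ (V : C) (v : V ⟶ Y) (w : b2 ⟶ V⟦(1 : ℤ)⟧) (i : a ⟶ V) (p : V ⟶ b1) (k : b1 ⟶ a⟦(1 : ℤ)⟧),
      Triangle.mk v (g ≫ g') w ∈ distTriang C ∧ Triangle.mk i p k ∈ distTriang C := by
  obtain ⟨V, v, w, hTV⟩ := distinguished_cocone_triangle₁ (g ≫ g')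
  obtain ⟨p, hp1, hp2⟩ := complete_distinguished_triangle_morphism₁ _ _ hTV hT' g (𝟙 b2)
    (by change (g ≫ g') ≫ 𝟙 _ = g ≫ g'; simp)
  change V ⟶ b1 at p
  have hfg : f ≫ g = 0 := comp_distTriang_mor_zero₁₂ _ hT
  obtain ⟨i, hi⟩ := Triangle.coyoneda_exact₂ _ hTV f (by
    change f ≫ g ≫ g' = 0
    rw [← assoc, hfg, zero_comp])
  change a ⟶ V at i
  change f = i ≫ v at hi
  have cf := col_of_dist hA.shift hT hb
  have cv := col_of_dist hA.shift hTV hb2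
  have ci : Col A i := by
    refine Col.mk' ?_ ?_
    · intro q hq k hk
      apply cf.inj hq
      rw [hi, ← assoc, hk]
      simp
    · intro q hq k
      obtain ⟨l, hl⟩ := cf.surj hq (k ≫ v)
      refine ⟨l, cv.inj hq ?_⟩
      rw [hl, hi, assoc]
  have lp : Loc (rperp A) p := by
    let φ : Triangle.mk v (g ≫ g') w ⟶ Triangle.mk f' g' h' :=
      { hom₁ := p, hom₂ := g, hom₃ := 𝟙 b2, comm₁ := hp1,
        comm₂ := by change (g ≫ g') ≫ 𝟙 _ = g ≫ g'; simp
        comm₃ := hp2 }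
    have := loc_five (rperp_shift hA.shift) ((invRotate C).map φ)
      (inv_rot_of_distTriang _ hTV) (inv_rot_of_distTriang _ hT') (by
        have : Loc (rperp A) (𝟙 b2) := by
          intro q hq
          simp only [id_comp]
          exact Function.bijective_id
        exact this.shift (rperp_shift hA.shift) (-1)) (loc_of_dist hA.shift hT ha)
    exact this
  obtain ⟨k, hk⟩ := dist_of_loc_col hA.shift ci lp ha hb1
  exact ⟨V, v, w, i, p, k, hTV, hk⟩

structure Cl (P : Set C) : Prop where
  zero : ∀ X : C, IsZero X → X ∈ P
  iso : ∀ {X Y : C}, (X ≅ Y) → X ∈ P → Y ∈ P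
  shift : ShSt P
  sum : ∀ {X Y : C}, X ∈ P → Y ∈ P → (X ⊞ Y) ∈ P

lemma Tri.cl {S : Set C} (hS : Tri S) : Cl S where
  zero := hS.zero
  iso := hS.iso
  shift := hS.shift
  sum {X Y} hX hY := hS.ext₂ _ (binaryBiproductTriangle_distinguished X Y) hX hY

lemma IsThickTriangulatedSub.tri {S : Set C} (hS : IsThickTriangulatedSub S) : Tri S where
  zero := hS.zero
  iso := hS.iso_closed
  shift := hS.shift
  ext₂ := hS.ext₂

lemma angle_cl (I : Set C) : Cl (angle I) where
  zero _ h := angleMem.zero h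
  iso e h := angleMem.iso e h
  shift _ n h := angleMem.shift n h
  sum h h' := angleMem.sum h h'

noncomputable def pairIso (f : WalkingPair → C) : (∏ᶜ f) ≅ f .left ⊞ f .right where
  hom := biprod.lift (Pi.π f .left) (Pi.π f .right)
  inv := Pi.lift (fun j => match j with
    | .left => biprod.fst
    | .right => biprod.snd)
  hom_inv_id := by
    apply Pi.hom_ext
    rintro (_ | _) <;> simp
  inv_hom_id := by
    apply biprod.hom_ext <;> simp

lemma star_iso {P Q : Set C} {X Y : C} (e : X ≅ Y) (h : X ∈ star P Q) : Y ∈ star P Q := by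
  obtain ⟨a, b, f, g, k, hT, ha, hb⟩ := h
  refine ⟨a, b, f ≫ e.hom, e.inv ≫ g, k, isomorphic_distinguished _ hT _ ?_, ha, hb⟩
  refine (Triangle.isoMk (Triangle.mk f g k) (Triangle.mk (f ≫ e.hom) (e.inv ≫ g) k)
    (Iso.refl _) e (Iso.refl _) ?_ ?_ ?_).symm
  · change f ≫ e.hom = 𝟙 _ ≫ f ≫ e.hom
    simp
  · change g ≫ 𝟙 _ = e.hom ≫ e.inv ≫ g
    simp
  · change k ≫ (𝟙 a)⟦(1 : ℤ)⟧' = 𝟙 _ ≫ k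
    simp

lemma star_cl {P Q : Set C} (hP : Cl P) (hQ : Cl Q) : Cl (star P Q) where
  zero X hX := ⟨X, _, _, _, _, contractible_distinguished X, hP.zero X hX,
    hQ.zero _ (isZero_zero C)⟩
  iso := star_iso
  shift X n hX := by
    obtain ⟨a, b, f, g, k, hT, ha, hb⟩ := hX
    exact ⟨_, _, _, _, _, Triangle.shift_distinguished _ hT n, hP.shift _ n ha, hQ.shift _ n hb⟩
  sum {X Y} hX hY := by
    obtain ⟨a, b, f, g, k, hT, ha, hb⟩ := hX
    obtain ⟨a', b', f', g', k', hT', ha', hb'⟩ := hY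
    let T : WalkingPair → Triangle C := fun j => match j with
      | .left => Triangle.mk f g k
      | .right => Triangle.mk f' g' k'
    have hTT := productTriangle_distinguished T (by rintro (_ | _) <;> assumption)
    refine star_iso (pairIso (fun j => (T j).obj₂)) ⟨_, _, _, _, _, hTT, ?_, ?_⟩
    · exact hP.iso (pairIso (fun j => (T j).obj₁)).symm (hP.sum ha ha')
    · exact hQ.iso (pairIso (fun j => (T j).obj₃)).symm (hQ.sum hb hb')

lemma subset_sd (P : Set C) : P ⊆ sd P := fun X hX => ⟨X, hX, 𝟙 X, 𝟙 X, by simp⟩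

lemma sd_mono {P Q : Set C} (h : P ⊆ Q) : sd P ⊆ sd Q := by
  rintro X ⟨K, hK, hs⟩
  exact ⟨K, h hK, hs⟩

lemma IsSummand.trans {X Y Z : C} (h : IsSummand X Y) (h' : IsSummand Y Z) : IsSummand X Z := by
  obtain ⟨r, k, e⟩ := h
  obtain ⟨r', k', e'⟩ := h'
  exact ⟨r ≫ r', k' ≫ k, by rw [assoc, reassoc_of% e', e]⟩

lemma sd_smd {P : Set C} {X Y : C} (h : IsSummand X Y) (hY : Y ∈ sd P) : X ∈ sd P := by
  obtain ⟨K, hK, hs⟩ := hY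
  exact ⟨K, hK, h.trans hs⟩

lemma isSummand_iso {X Y : C} (e : X ≅ Y) : IsSummand X Y := ⟨e.hom, e.inv, by simp⟩

lemma sd_cl {P : Set C} (hP : Cl P) : Cl (sd P) where
  zero X hX := subset_sd P (hP.zero X hX)
  iso e h := sd_smd (isSummand_iso e.symm) h
  shift X n h := by
    obtain ⟨K, hK, r, k, e⟩ := h
    exact ⟨K⟦n⟧, hP.shift K n hK, r⟦n⟧', k⟦n⟧', by rw [← Functor.map_comp, e, CategoryTheory.Functor.map_id]⟩
  sum h h' := by
    obtain ⟨K, hK, r, k, e⟩ := h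
    obtain ⟨K', hK', r', k', e'⟩ := h'
    refine ⟨_, hP.sum hK hK', biprod.map r r', biprod.map k k', ?_⟩
    apply biprod.hom_ext <;> simp [e, e']

/-- `⟨I⟩` is the smallest -/
lemma angle_sub {I S : Set C} (hS : Cl S) (hsd : ∀ {X Y : C}, IsSummand X Y → Y ∈ S → X ∈ S)
    (h : I ⊆ S) : angle I ⊆ S := by
  intro X hX
  induction hX with
  | of hX => exact h hX
  | zero hX => exact hS.zero _ hX
  | shift n _ ih => exact hS.shift _ n ih
  | sum _ _ ih ih' => exact hS.sum ih ih'
  | smd h _ ih => exact hsd h ih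
  | iso e _ ih => exact hS.iso e ih

lemma angle_sub_sd {P : Set C} (hP : Cl P) : angle P ⊆ sd P :=
  angle_sub (sd_cl hP) sd_smd (subset_sd P)

lemma sub_angle (P : Set C) : P ⊆ angle P := fun _ h => angleMem.of h

lemma angle_mono {I J : Set C} (h : I ⊆ angle J) : angle I ⊆ angle J :=
  angle_sub (angle_cl J) angleMem.smd h

lemma star_mono {P P' Q Q' : Set C} (h : P ⊆ P') (h' : Q ⊆ Q') : star P Q ⊆ star P' Q' := by
  rintro X ⟨a, b, f, g, k, hT, ha, hb⟩
  exact ⟨a, b, f, g, k, hT, h ha, h' hb⟩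

lemma star_sd (P Q : Set C) : star (sd P) (sd Q) ⊆ sd (star P Q) := by
  have key : ∀ (R : Set C) (X : C), X ∈ sd R → ObjectProperty.retractClosure (fun Y => Y ∈ R) X := by
    rintro R X ⟨K, hK, r, k, e⟩
    exact ⟨K, hK, ⟨⟨r, k, e⟩⟩⟩
  rintro X ⟨a, b, f, g, k, hT, ha, hb⟩
  have := ObjectProperty.extensionProduct_retractClosure_retractClosure_le
    (fun Y => Y ∈ P) (fun Y => Y ∈ Q) X ⟨a, b, f, g, k, hT, key _ _ ha, key _ _ hb⟩
  obtain ⟨K, hK, ⟨e⟩⟩ := this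
  exact ⟨K, hK, e.i, e.r, e.retract⟩

lemma star_self {S : Set C} (hS : Tri S) : star S S ⊆ S := by
  rintro X ⟨a, b, f, g, k, hT, ha, hb⟩
  exact hS.ext₂ _ hT ha hb

lemma sd_thick {S : Set C} (hS : Tri S) : IsThickTriangulatedSub (sd S) where
  zero := (sd_cl hS.cl).zero
  iso_closed := (sd_cl hS.cl).iso
  shift := (sd_cl hS.cl).shift
  ext₂ T hT h₁ h₃ := sd_mono (star_self hS) (star_sd S S ⟨_, _, _, _, _, hT, h₁, h₃⟩)
  summand := sd_smd

lemma angle_sub_thick {I S : Set C} (hS : IsThickTriangulatedSub S) (h : I ⊆ S) : angle I ⊆ S :=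
  angle_sub hS.tri.cl hS.summand h

lemma angleN_sub_thick {I S : Set C} (hS : IsThickTriangulatedSub S) (h : I ⊆ S) :
    ∀ n, angleN I n ⊆ S
  | 0 => by simp [angleN]
  | 1 => angle_sub_thick hS h
  | n + 2 => angle_sub_thick hS ((star_mono (angleN_sub_thick hS h (n + 1))
      (angle_sub_thick hS h)).trans (star_self hS.tri))

lemma angleN_succ_cl (I : Set C) : ∀ n, Cl (angleN I (n + 1))
  | 0 => angle_cl _
  | _ + 1 => angle_cl _

lemma angleN_succ_smd (I : Set C) {X Y : C} (h : IsSummand X Y) :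
    ∀ n, Y ∈ angleN I (n + 1) → X ∈ angleN I (n + 1)
  | 0 => angleMem.smd h
  | _ + 1 => angleMem.smd h

lemma angleN_sd (I : Set C) (n : ℕ) : sd (angleN I (n + 1)) ⊆ angleN I (n + 1) := by
  rintro X ⟨K, hK, h⟩
  exact angleN_succ_smd I h n hK

/-- star of `A` with `sd` -/
lemma star_sd_right (A Q : Set C) : star A (sd Q) ⊆ sd (star A Q) :=
  (star_mono (subset_sd A) le_rfl).trans (star_sd A Q)

lemma star_assoc {A P Q : Set C} (hA : Tri A) (hP : P ⊆ rperp A) (hQ : Q ⊆ rperp A)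
    (hPQ : star P Q ⊆ rperp A) : star A (star P Q) ⊆ star (star A P) Q := by
  rintro Y ⟨a, b, f, g, h, hT, ha, hb⟩
  have hb' := hPQ hb
  obtain ⟨b1, b2, f', g', h', hT', hb1, hb2⟩ := hb
  obtain ⟨V, v, w, i, p, k, h1, h2⟩ := octa hA hT hT' ha hb' (hP hb1) (hQ hb2)
  exact ⟨V, b2, v, _, w, h1, ⟨a, b1, i, p, k, h2, ha, hb1⟩, hb2⟩

lemma count {A B : Set C} {G gB : C} {p : ℕ} (hA : Tri A)
    (hAG : A ⊆ {X | IsZero X} ∪ angleN {G} p) (hB : IsThickTriangulatedSub B)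
    (hgB : gB ∈ B) (hgG : gB ∈ angle {G}) (hAB : B ⊆ rperp A) :
    ∀ j, star A (angleN {gB} (j + 1)) ⊆ angleN {G} (p + j + 1) := by
  have hang : angle {gB} ⊆ angle {G} := angle_mono (by simpa using hgG)
  have hsub : ∀ n, angleN {gB} n ⊆ B := angleN_sub_thick hB (by simpa using hgB)
  intro j
  induction j with
  | zero =>
    rcases p with _ | p
    · rintro Y ⟨a, b, f, g, h, hT, ha, hb⟩
      have ha0 : IsZero a := by
        rcases hAG ha with h | h
        · exact h
        · exact absurd h (by simp [angleN])
      have : IsIso g := (Triangle.isZero₁_iff_isIso₂ _ hT).1 ha0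
      exact (angle_cl {G}).iso (asIso g).symm (hang hb)
    · refine subset_trans ?_ (sub_angle _)
      refine star_mono ?_ hang
      intro X hX
      rcases hAG hX with h | h
      · exact (angleN_succ_cl {G} p).zero _ h
      · exact h
  | succ j ih =>
    have h1 : angleN {gB} (j + 1 + 1) ⊆ sd (star (angleN {gB} (j + 1)) (angle {gB})) :=
      angle_sub_sd (star_cl (angleN_succ_cl _ _) (angle_cl _))
    have h0 := (star_mono (hsub (j + 1)) (hsub 1)).trans (star_self hB.tri)
    refine (star_mono le_rfl h1).trans ((star_sd_right _ _).trans ?_)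
    refine (sd_mono (star_assoc hA ((hsub _).trans hAB) ((hsub 1).trans hAB) (h0.trans hAB))).trans ?_
    refine (sd_mono (star_mono ih hang)).trans ?_
    exact (sd_mono (sub_angle _)).trans (angleN_sd {G} (p + j + 1))

lemma star_tri {A B : Set C} (hA : Tri A) (hB : Tri B) (hAB : B ⊆ rperp A) : Tri (star A B) where
  zero := (star_cl hA.cl hB.cl).zero
  iso := star_iso
  shift := (star_cl hA.cl hB.cl).shift
  ext₂ := star_ext hA hB hAB

lemma sub_star_left {A B : Set C} (hB : Cl B) : A ⊆ star A B := fun X hX =>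
  ⟨X, _, _, _, _, contractible_distinguished X, hX, hB.zero _ (isZero_zero C)⟩

lemma sub_star_right {A B : Set C} (hA : Cl A) : B ⊆ star A B := fun X hX =>
  ⟨_, X, _, _, _, contractible_distinguished₁ X, hA.zero _ (isZero_zero C), hX⟩

lemma zeros_tri : Tri {X : C | IsZero X} where
  zero _ h := h
  iso e h := h.of_iso e.symm
  shift X n h := (shiftFunctor C n).map_isZero h
  ext₂ T hT h₁ h₃ := by
    have : IsIso T.mor₂ := (Triangle.isZero₁_iff_isIso₂ _ hT).1 h₁
    exact IsZero.of_iso h₃ (asIso T.mor₂)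

lemma main_ind (G : C) : ∀ (m : ℕ) (I : Fin m → Set C) (n : Fin m → ℕ) (g : Fin m → C)
    (_ : ∀ l, IsThickTriangulatedSub (I l)) (_ : ∀ l, g l ∈ I l) (_ : ∀ l, g l ∈ angle {G})
    (_ : ∀ l, I l = angleN {g l} (n l + 1))
    (_ : ∀ i j : Fin m, i < j → ∀ (K L : C), K ∈ I j → L ∈ I i → ∀ f : K ⟶ L, f = 0),
    ∃ S : Set C, Tri S ∧ (∀ l, I l ⊆ S) ∧ S ⊆ {X | IsZero X} ∪ angleN {G} (∑ l, (n l + 1)) ∧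
      ∀ Q : C, (∀ l, ∀ K ∈ I l, ∀ f : K ⟶ Q, f = 0) → Q ∈ rperp S := by
  intro m
  induction m with
  | zero =>
    intro I n g _ _ _ _ _
    refine ⟨{X | IsZero X}, zeros_tri, fun l => l.elim0, Set.subset_union_left, ?_⟩
    intro Q _ X hX f
    exact hX.eq_of_src _ _
  | succ m ih =>
    intro I n g hI hg hgG hIn horth
    obtain ⟨S, hS, hIS, hSG, hSQ⟩ := ih (fun l => I l.succ) (fun l => n l.succ)
      (fun l => g l.succ) (fun l => hI _) (fun l => hg _) (fun l => hgG _) (fun l => hIn _)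
      (fun i j hij => horth _ _ (Fin.succ_lt_succ_iff.2 hij))
    have hperp : I 0 ⊆ rperp S := fun Q hQ => hSQ Q (fun l K hK f =>
      horth 0 l.succ (Fin.succ_pos l) K Q hK hQ f)
    refine ⟨star S (I 0), star_tri hS (hI 0).tri hperp, ?_, ?_, ?_⟩
    · intro l
      refine Fin.cases ?_ (fun l => ?_) l
      · exact sub_star_right hS.cl
      · exact (hIS l).trans (sub_star_left (hI 0).tri.cl)
    · refine subset_trans ?_ Set.subset_union_right
      have := count hS hSG (hI 0) (hg 0) (hgG 0) hperp (n 0)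
      rw [← hIn 0] at this
      rw [Fin.sum_univ_succ, add_comm (n 0 + 1)]
      exact this
    · rintro Q hQ Y ⟨a, b, f, g, h, hT, ha, hb⟩ k
      have e : f ≫ k = 0 := hSQ Q (fun l => hQ l.succ) a ha _
      obtain ⟨k', rfl⟩ := Triangle.yoneda_exact₂ _ hT k e
      rw [hQ 0 b hb k']
      exact comp_zero

lemma exists_sum : ∀ (m : ℕ) (g : Fin m → C), ∃ G : C, ∀ l, IsSummand (g l) G := by
  intro m
  induction m with
  | zero =>
    obtain ⟨Z, _⟩ := HasZeroObject.zero (C := C)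
    exact fun g => ⟨Z, fun l => l.elim0⟩
  | succ m ih =>
    intro g
    obtain ⟨G, hG⟩ := ih (fun l => g l.succ)
    refine ⟨g 0 ⊞ G, fun l => Fin.cases ?_ (fun l => ?_) l⟩
    · exact ⟨biprod.inl, biprod.fst, by simp⟩
    · exact (hG l).trans ⟨biprod.inr, biprod.snd, by simp⟩

lemma dim_attained {S : Set C} (h : relRouquierDim S ≠ ⊤) :
    ∃ n : ℕ, relRouquierDim S = n ∧ ∃ G ∈ S, S = angleN {G} (n + 1) := by
  have hne : {c : ℕ∞ | ∃ n : ℕ, c = (n : ℕ∞) ∧ ∃ G ∈ S, S = angleN {G} (n + 1)}.Nonempty := by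
    by_contra hc
    rw [Set.not_nonempty_iff_eq_empty] at hc
    apply h
    rw [relRouquierDim, hc, sInf_empty]
  exact csInf_mem hne

/-- If `ℐ_1, …, ℐ_m` are thick full triangulated subcategories such that
`Hom(K, L) = 0` whenever `K ∈ ℐ_j`, `L ∈ ℐ_i` with `j > i`, and `⟨ℐ_1 ∪ ⋯ ∪ ℐ_m⟩_∞ = 𝒯`,
then `rdim 𝒯 ≤ ∑_{l=1}^m (rdim ℐ_l + 1) − 1`. -/
theorem rouquierDim_le_of_sod (m : ℕ) (I : Fin m → Set C)
    (hI : ∀ l, IsThickTriangulatedSub (I l))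
    (horth : ∀ i j : Fin m, i < j → ∀ (K L : C), K ∈ I j → L ∈ I i → ∀ f : K ⟶ L, f = 0)
    (hgen : angleInf (⋃ l, I l) = Set.univ) :
    relRouquierDim (Set.univ : Set C) ≤ (∑ l : Fin m, (relRouquierDim (I l) + 1)) - 1 := by
  by_cases htop : ∃ l, relRouquierDim (I l) = ⊤
  · obtain ⟨l, hl⟩ := htop
    have : (∑ l : Fin m, (relRouquierDim (I l) + 1)) = ⊤ := by
      rw [eq_top_iff]
      calc (⊤ : ℕ∞) = relRouquierDim (I l) + 1 := by rw [hl]; rfl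
        _ ≤ _ := Finset.single_le_sum (f := fun l => relRouquierDim (I l) + 1)
          (fun _ _ => zero_le) (Finset.mem_univ l)
    rw [this]
    exact le_top
  push Not at htop
  choose n hn g hg hIg using fun l => dim_attained (htop l)
  obtain ⟨G, hG⟩ := exists_sum m g
  obtain ⟨S, hS, hIS, hSG, -⟩ := main_ind G m I n g hI hg
    (fun l => angleMem.smd (hG l) (angleMem.of rfl)) hIg horth
  have huniv : ∀ X : C, X ∈ sd S := by
    intro X
    have hX : X ∈ angleInf (⋃ l, I l) := by rw [hgen]; trivial
    obtain ⟨k, hk⟩ := Set.mem_iUnion.1 hX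
    exact angleN_sub_thick (sd_thick hS)
      (Set.iUnion_subset fun l => (hIS l).trans (subset_sd S)) k hk
  have hsum : (∑ l : Fin m, (relRouquierDim (I l) + 1)) = ((∑ l, (n l + 1) : ℕ) : ℕ∞) := by
    push_cast
    exact Finset.sum_congr rfl fun l _ => by rw [hn l]
  rw [hsum]
  obtain ⟨N, hN⟩ : ∃ N : ℕ, N = ∑ l, (n l + 1) := ⟨_, rfl⟩
  rw [← hN] at hSG ⊢
  have hle : sd S ⊆ angleN {G} ((N - 1) + 1) := by
    refine subset_trans (sd_mono ?_) (angleN_sd {G} (N - 1))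
    intro X hX
    rcases hSG hX with h | h
    · exact (angleN_succ_cl {G} (N - 1)).zero _ h
    · rcases N with _ | N
      · exact absurd h (by simp [angleN])
      · exact h
  refine sInf_le ⟨N - 1, by simp, G, trivial, ?_⟩
  exact (Set.eq_univ_of_forall fun X => hle (huniv X)).symm

end RouquierDim
end

section
/- Let 𝒯 be a ℤ/m-graded triangulated category (1 ≤ m ≤ ∞), let k be a field, and let R be a commutative k-algebra of finite type acting centrally on 𝒯. Suppose there exists a split-generator G of 𝒯 such that Hom^•(G, G) is a Noetherian R-module. Then rdim 𝒯 ≥ dim_R Hom^•(G, G), the Krull dimension of the R-module Hom^•(G, G). -/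
open CategoryTheory Category Limits Pretriangulated DirectSum

universe v u

namespace RouquierDim

variable {C : Type u} [Category.{v} C] [Preadditive C] [HasZeroObject C]
  [HasShift C ℤ] [∀ n : ℤ, (shiftFunctor C n).Additive] [Pretriangulated C]
  [HasBinaryBiproducts C]

/-- `G` is a split-generator of the triangulated category `C`:
`C = ⟨G⟩_n` for some `n ∈ ℕ`. -/
def IsSplitGenerator (G : C) : Prop := ∃ n : ℕ, angleN {G} n = Set.univ

/-- A central action of a commutative ring `R` on the (`ℤ/m`-graded) triangulated
category `C`: a ring homomorphism `φ K : R →+* End K` for every object `K`, natural in `K`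
and compatible with the shift. -/
structure CentralAction (R : Type*) [CommRing R] where
  φ : ∀ K : C, R →+* End K
  natural : ∀ {K L : C} (f : K ⟶ L) (r : R), φ K r ≫ f = f ≫ φ L r
  shift_comm : ∀ (K : C) (r : R) (n : ℤ), φ (K⟦n⟧) r = (φ K r)⟦n⟧'

variable {R : Type*} [CommRing R]

/-- The `R`-module structure on `Hom(X, Y)` induced by a central action:
`r • f = f ≫ φ Y r` (equivalently, `φ X r ≫ f`, by naturality). -/
def CentralAction.homModule (A : CentralAction (C := C) R) (X Y : C) :
    Module R (X ⟶ Y) :=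
  Module.compHom (X ⟶ Y) (A.φ Y)

/-- `Hom^•(X, Y) = ⊕_{i ∈ ℤ/m} Hom(X, Σ^i Y)` as an `R`-module, for the `ℤ/m`-graded
triangulated category `C` (`m = 0` encodes `m = ∞`, in which case `ℤ/m = ℤ`), packaged
as an object of `ModuleCat R`. -/
noncomputable def CentralAction.HomBullet (A : CentralAction (C := C) R) (m : ℕ)
    (X Y : C) : ModuleCat R :=
  letI : ∀ i : ZMod m, Module R (X ⟶ Y⟦(ZMod.cast i : ℤ)⟧) := fun _ => A.homModule _ _
  ModuleCat.of R (⨁ i : ZMod m, (X ⟶ Y⟦(ZMod.cast i : ℤ)⟧))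

variable (C) in
/-- The Rouquier dimension of the triangulated category `C`: the smallest `n ∈ ℕ ∪ {∞}`
such that `C = ⟨G⟩_{n+1}` for some object `G`. -/
noncomputable def rouquierDim : ℕ∞ :=
  sInf {c : ℕ∞ | ∃ n : ℕ, c = (n : ℕ∞) ∧ ∃ G : C, angleN {G} (n + 1) = Set.univ}

set_option linter.all false
set_option linter.unusedSectionVars false
open Polynomial in
def GoodRing (d : ℕ) (A : Type*) [CommRing A] : Prop :=
  ∀ g : A, ¬ IsNilpotent g → ∃ x : ℕ → A,
    (∀ i < d, ∀ p, x i * p ∈ Ideal.span (x '' Set.Iio i) → p ∈ Ideal.span (x '' Set.Iio i)) ∧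
    ∀ n, g ^ n ∉ Ideal.span (x '' Set.Iio d)

theorem GoodRing.zero (A : Type*) [CommRing A] : GoodRing 0 A := by
  intro g hg
  refine ⟨0, by simp, fun n hn => hg ⟨n, ?_⟩⟩
  simpa using hn

theorem GoodRing.equiv {d : ℕ} {A B : Type*} [CommRing A] [CommRing B] (e : A ≃+* B)
    (h : GoodRing d A) : GoodRing d B := by
  intro g hg
  obtain ⟨x, hx, hn⟩ := h (e.symm g) (by
    intro h; apply hg; simpa using h.map e)
  have key : ∀ i, Ideal.span ((fun j => e (x j)) '' Set.Iio i)
      = (Ideal.span (x '' Set.Iio i)).map e := by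
    intro i
    rw [Ideal.map_span, Set.image_image]
  have mem : ∀ i (p : B), p ∈ Ideal.span ((fun j => e (x j)) '' Set.Iio i) ↔
      e.symm p ∈ Ideal.span (x '' Set.Iio i) := by
    intro i p
    rw [key, ← Ideal.comap_symm]
    rfl
  refine ⟨fun j => e (x j), ?_, ?_⟩
  · intro i hi p hp
    rw [mem] at hp ⊢
    apply hx i hi
    simpa using hp
  · intro n hp
    rw [mem] at hp
    exact hn n (by simpa using hp)

open Polynomial in
theorem GoodRing.poly {d : ℕ} {A : Type*} [CommRing A]
    (h : GoodRing d A) : GoodRing (d + 1) A[X] := by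
  intro g hg
  obtain ⟨j, hj⟩ : ∃ j, ¬ IsNilpotent (g.coeff j) := by
    rw [Polynomial.isNilpotent_iff] at hg
    simpa using hg
  obtain ⟨x, hx, hn⟩ := h _ hj
  let y : ℕ → A[X] := fun i => if i < d then C (x i) else 1 + X * g
  have key : ∀ i ≤ d, Ideal.span (y '' Set.Iio i) = (Ideal.span (x '' Set.Iio i)).map C := by
    intro i hi
    rw [Ideal.map_span, Set.image_image]
    congr 1
    apply Set.image_congr
    intro k hk
    have : k < d := lt_of_lt_of_le hk hi
    simp [y, this]
  refine ⟨y, ?_, ?_⟩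
  · intro i hi p hp
    rw [key i (by omega)] at hp ⊢
    rcases Nat.lt_or_ge i d with hid | hid
    · have : y i = C (x i) := by simp [y, hid]
      rw [this] at hp
      rw [Ideal.mem_map_C_iff] at hp ⊢
      intro n
      apply hx i hid
      simpa using hp n
    · have : y i = 1 + X * g := by simp [y, hid]
      rw [this] at hp
      rw [Ideal.mem_map_C_iff]
      intro n
      have h1 : (1 - (- (X * g)) ^ (n+1)) * p ∈ (Ideal.span (x '' Set.Iio i)).map C := by
        obtain ⟨c, hc⟩ := one_sub_dvd_one_sub_pow (-(X * g)) (n+1)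
        rw [hc]
        have : (1 - -(X * g)) * c * p = c * ((1 + X * g) * p) := by ring
        rw [this]
        exact Ideal.mul_mem_left _ _ hp
      rw [Ideal.mem_map_C_iff] at h1
      have h2 := h1 n
      have h3 : (1 - (- (X * g)) ^ (n+1)) * p = p - X ^ (n+1) * ((-g)^(n+1) * p) := by
        rw [← mul_neg, mul_pow]; ring
      rw [h3, coeff_sub, coeff_X_pow_mul'] at h2
      simpa using h2
  · intro n hp
    have e1 : Set.Iio (d+1) = insert d (Set.Iio d) := by
      ext z; simp only [Set.mem_Iio, Set.mem_insert_iff]; omega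
    rw [e1, Set.image_insert_eq, Ideal.mem_span_insert] at hp
    obtain ⟨a, z, hz, hp⟩ := hp
    rw [key d le_rfl] at hz
    have : y d = 1 + X * g := by simp [y]
    rw [this] at hp
    set I := Ideal.span (x '' Set.Iio d) with hI
    have hz' : z.map (Ideal.Quotient.mk I) = 0 := by
      rw [Ideal.mem_map_C_iff] at hz
      ext k
      rw [coeff_map, coeff_zero, Ideal.Quotient.eq_zero_iff_mem]
      exact hz k
    have hp' := congrArg (Polynomial.map (Ideal.Quotient.mk I)) hp
    simp only [Polynomial.map_pow, Polynomial.map_add, Polynomial.map_mul, hz', add_zero,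
      Polynomial.map_one, Polynomial.map_X] at hp'
    set G := g.map (Ideal.Quotient.mk I) with hG
    have hu : IsUnit (1 + X * G) := by
      have hc : IsCoprime (1 + X * G) (G ^ n) := by
        apply IsCoprime.pow_right
        exact ⟨1, -X, by ring⟩
      rw [isUnit_iff_dvd_one]
      obtain ⟨u, v, huv⟩ := hc
      have e2 : (1 : (Polynomial (A ⧸ I))) = (u + v * a.map (Ideal.Quotient.mk I)) * (1 + X * G) := by
        linear_combination (-1 : Polynomial (A ⧸ I)) * huv + v * hp'
      exact Dvd.intro_left _ e2.symm
    rw [isUnit_iff_coeff_isUnit_isNilpotent] at hu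
    have := hu.2 (j+1) (by omega)
    rw [coeff_add, coeff_X_mul, coeff_one] at this
    simp only [hG, coeff_map] at this
    obtain ⟨N, hN⟩ := this
    apply hn N
    rw [← Ideal.Quotient.eq_zero_iff_mem, map_pow]
    simpa using hN

theorem GoodRing.mv (d : ℕ) (k : Type*) [CommRing k] : GoodRing d (MvPolynomial (Fin d) k) := by
  induction d with
  | zero => exact GoodRing.zero _
  | succ n ih => exact GoodRing.equiv (MvPolynomial.finSuccEquiv k n).symm.toRingEquiv ih.poly

/-- almost free -/
def AlmostFree {P : Type*} [CommRing P] (g : P) (M : Type*) [AddCommGroup M] [Module P M] : Prop :=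
  ∃ (r : ℕ) (f : (Fin r → P) →ₗ[P] M) (h : M →ₗ[P] (Fin r → P)),
    (∀ m, f (h m) = g • m) ∧ ∀ v, h (f v) = g • v

theorem AlmostFree.mul {P : Type*} [CommRing P] {g : P} (c : P) {M : Type*} [AddCommGroup M]
    [Module P M] (H : AlmostFree g M) : AlmostFree (c * g) M := by
  obtain ⟨r, f, h, h1, h2⟩ := H
  exact ⟨r, f, c • h, by simp [h1, mul_smul], by simp [h2, mul_smul]⟩

theorem AlmostFree.equiv {P : Type*} [CommRing P] {g : P} {M N : Type*} [AddCommGroup M]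
    [Module P M] [AddCommGroup N] [Module P N] (e : M ≃ₗ[P] N)
    (H : AlmostFree g M) : AlmostFree g N := by
  obtain ⟨r, f, h, h1, h2⟩ := H
  exact ⟨r, e.toLinearMap ∘ₗ f, h ∘ₗ e.symm.toLinearMap, by simp [h1], by simp [h2]⟩

theorem AlmostFree.of_zero {P : Type*} [CommRing P] (g : P) {M : Type*} [AddCommGroup M]
    [Module P M] (H : ∀ m : M, m = 0) : AlmostFree g M :=
  ⟨0, 0, 0, fun m => by simp [H m], fun v => Subsingleton.elim _ _⟩

theorem exists_almostFree {P : Type*} [CommRing P] [IsDomain P] (M : Type*)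
    [AddCommGroup M] [Module P M] [Module.Finite P M] : ∃ g : P, g ≠ 0 ∧ AlmostFree g M := by
  classical
  obtain ⟨s, hs, hli⟩ := exists_set_linearIndependent P M
  have hfin : s.Finite := hli.setFinite
  have : Fintype s := hfin.fintype
  let e : s ≃ Fin (Fintype.card s) := Fintype.equivFin s
  have hli' : LinearIndependent P (fun i => ((e.symm i : s) : M)) :=
    hli.comp _ e.symm.injective
  let f := Fintype.linearCombination P (fun i => ((e.symm i : s) : M))
  have hf : Function.Injective f := by
    exact (linearIndependent_iff_injective_fintypeLinearCombination.mp hli')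
  have hr : LinearMap.range f = Submodule.span P s := by
    rw [Fintype.range_linearCombination]
    congr 1
    ext m
    constructor
    · rintro ⟨i, rfl⟩; exact (e.symm i).2
    · intro hm; exact ⟨e ⟨m, hm⟩, by simp⟩
  have h0 : Module.rank P (M ⧸ Submodule.span P s) = 0 := by
    have h1 := HasRankNullity.rank_quotient_add_rank (Submodule.span P s)
    rw [rank_span_set hli, hs] at h1
    have h2 : Module.rank P M < Cardinal.aleph0 := Module.rank_lt_aleph0 P M
    have := Cardinal.eq_of_add_eq_add_right (a := Module.rank P (M ⧸ Submodule.span P s)) (b := Module.rank P M) (c := 0)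
      (by rw [h1, zero_add]) h2
    exact this
  rw [rank_eq_zero_iff] at h0
  have hT : Module.IsTorsion P (M ⧸ Submodule.span P s) := by
    intro x
    obtain ⟨a, ha, hx⟩ := h0 x
    exact ⟨⟨a, mem_nonZeroDivisors_of_ne_zero ha⟩, hx⟩
  obtain ⟨g, hg, hg0⟩ := Submodule.annihilator_top_inter_nonZeroDivisors hT
  have hmem : ∀ m : M, g • m ∈ LinearMap.range f := by
    intro m
    rw [hr, ← Submodule.Quotient.mk_eq_zero, Submodule.Quotient.mk_smul]
    exact (Submodule.mem_annihilator.mp hg) _ trivial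
  have key : ∀ m, f ((LinearEquiv.ofInjective f hf).symm ⟨g • m, hmem m⟩) = g • m := by
    intro m
    exact congrArg Subtype.val ((LinearEquiv.ofInjective f hf).apply_symm_apply ⟨g • m, hmem m⟩)
  refine ⟨g, nonZeroDivisors.ne_zero hg0, _, f, (LinearEquiv.ofInjective f hf).symm.toLinearMap ∘ₗ
    LinearMap.codRestrict (LinearMap.range f) (g • LinearMap.id) hmem, ?_, ?_⟩
  · intro m
    exact key m
  · intro v
    apply hf
    rw [map_smul]
    exact key (f v)

theorem mem_pi_smul_top {P : Type*} [CommRing P] {r : ℕ} (I : Ideal P) (v : Fin r → P) :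
    v ∈ I • (⊤ : Submodule P (Fin r → P)) ↔ ∀ i, v i ∈ I := by
  constructor
  · intro h i
    have : LinearMap.proj (R := P) (φ := fun _ : Fin r => P) i v ∈ I • (⊤ : Submodule P P) :=
      Submodule.smul_top_le_comap_smul_top I _ h
    simpa using this
  · intro h
    rw [pi_eq_sum_univ v]
    exact Submodule.sum_mem _ fun i _ => Submodule.smul_mem_smul (h i) trivial

theorem map_mem_smul_top {P : Type*} [CommRing P] {M N : Type*} [AddCommGroup M]
    [Module P M] [AddCommGroup N] [Module P N] (I : Ideal P) (f : M →ₗ[P] N) {m : M}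
    (h : m ∈ I • (⊤ : Submodule P M)) : f m ∈ I • (⊤ : Submodule P N) :=
  Submodule.smul_top_le_comap_smul_top I f h

theorem AlmostFree.reg {P : Type*} [CommRing P] {g x : P} {I : Ideal P} {M : Type*}
    [AddCommGroup M] [Module P M] (H : AlmostFree g M) (hx : ∀ p, x * p ∈ I → p ∈ I)
    (m : M) (hm : x • m ∈ I • (⊤ : Submodule P M)) : g • m ∈ I • (⊤ : Submodule P M) := by
  obtain ⟨r, f, h, h1, h2⟩ := H
  rw [← h1]
  apply map_mem_smul_top
  have := map_mem_smul_top I h hm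
  rw [map_smul, mem_pi_smul_top] at this
  rw [mem_pi_smul_top]
  exact fun i => hx _ (this i)

theorem AlmostFree.nonvanish {P : Type*} [CommRing P] {g : P} {I : Ideal P} {M : Type*}
    [AddCommGroup M] [Module P M] (H : AlmostFree g M) (hg : ∀ n, g ^ n ∉ I)
    {m₀ : M} (hm₀ : g • m₀ ≠ 0) (n : ℕ) 
    (hm : ∀ m : M, g ^ n • m ∈ I • (⊤ : Submodule P M)) : False := by
  obtain ⟨r, f, h, h1, h2⟩ := H
  rcases r with _ | r
  · apply hm₀
    rw [← h1, Subsingleton.elim (h m₀) 0, map_zero]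
  · have := map_mem_smul_top I h (hm (f (Pi.single 0 1)))
    rw [map_smul, h2, mem_pi_smul_top] at this
    apply hg (n+1)
    simpa [pow_succ] using this 0

theorem ringKrullDim_le_of_integral {P A : Type*} [CommRing P] [CommRing A] (f : P →+* A)
    (hf : f.IsIntegral) : ringKrullDim A ≤ ringKrullDim P := by
  algebraize [f]
  refine Order.krullDim_le_of_strictMono (fun I ↦ ⟨Ideal.comap (algebraMap P A) I.asIdeal, inferInstance⟩) ?_
  intro I J hIJ
  exact Ideal.IsIntegral.comap_lt_comap (R := P) (I := I.asIdeal) (J := J.asIdeal) hIJ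

theorem ringKrullDim_quotient_mono {R : Type*} [CommRing R] {I J : Ideal R}
    (h : J ≤ I.radical) : ringKrullDim (R ⧸ I) ≤ ringKrullDim (R ⧸ J) := by
  rw [ringKrullDim_quotient, ringKrullDim_quotient]
  refine Order.krullDim_le_of_strictMono (fun a => ⟨a.1, ?_⟩) fun a b hab => hab
  obtain ⟨a, ha⟩ := a
  rw [← PrimeSpectrum.zeroLocus_radical] at ha
  exact PrimeSpectrum.zeroLocus_anti_mono h ha

theorem noether_setup (k R : Type*) [Field k] [CommRing R] [Algebra k R] [Algebra.FiniteType k R]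
    (J : Ideal R) (hJ : J ≠ ⊤) : ∃ (d : ℕ) (f : MvPolynomial (Fin d) k →+* R),
      ringKrullDim (R ⧸ J) ≤ d ∧ (∀ p, f p ∈ J → p = 0) ∧
      ((Ideal.Quotient.mk J).comp f).Finite := by
  have : Nontrivial (R ⧸ J) := Ideal.Quotient.nontrivial_iff.mpr hJ
  obtain ⟨d, q, hq, hfin⟩ := exists_finite_inj_algHom_of_fg k (R ⧸ J)
  let y : Fin d → R := fun i => (Ideal.Quotient.mk_surjective (q (MvPolynomial.X i))).choose
  have hy : ∀ i, Ideal.Quotient.mk J (y i) = q (MvPolynomial.X i) := fun i =>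
    (Ideal.Quotient.mk_surjective (q (MvPolynomial.X i))).choose_spec
  let f := MvPolynomial.aeval (R := k) y
  have hf : (Ideal.Quotient.mkₐ k J).comp f = q := by
    apply MvPolynomial.algHom_ext
    intro i
    simp [f, hy]
  have hf' : ((Ideal.Quotient.mk J).comp f.toRingHom) = q.toRingHom := by
    rw [← hf]; rfl
  refine ⟨d, f.toRingHom, ?_, ?_, ?_⟩
  · refine (ringKrullDim_le_of_integral q.toRingHom hfin.to_isIntegral).trans ?_
    rw [MvPolynomial.ringKrullDim_of_isNoetherianRing]
    simp
  · intro p hp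
    apply hq
    rw [map_zero, ← hf]
    exact Ideal.Quotient.eq_zero_iff_mem.mpr hp
  · rw [hf']; exact hfin

theorem finite_restrict {P R N : Type*} [CommRing P] [CommRing R] [AddCommGroup N]
    [Module R N] [Module P N] (f : P →+* R) (hsm : ∀ (p : P) (n : N), p • n = f p • n)
    (J : Ideal R) (hJ : ∀ r ∈ J, ∀ n : N, r • n = 0)
    (hfin : ((Ideal.Quotient.mk J).comp f).Finite) [Module.Finite R N] : Module.Finite P N := by
  have ht : Module.IsTorsionBySet R N J := fun n r => hJ r r.2 n
  let : Module (R ⧸ J) N := ht.module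
  have : IsScalarTower R (R ⧸ J) N := ht.isScalarTower
  have : Module.Finite (R ⧸ J) N := Module.Finite.of_restrictScalars_finite R _ _
  algebraize [(Ideal.Quotient.mk J).comp f]
  have : Module.Finite P (R ⧸ J) := hfin
  have : IsScalarTower P (R ⧸ J) N := by
    constructor
    intro p a n
    rw [hsm, Algebra.smul_def, mul_smul]
    rfl
  exact Module.Finite.trans (R ⧸ J) N


/-! ### Closure lemmas -/

theorem angle_induct (I : Set C) (Q : C → Prop) (hI : ∀ X ∈ I, Q X) (hz : ∀ X, IsZero X → Q X)
    (hshift : ∀ X (n : ℤ), Q X → Q (X⟦n⟧)) (hsum : ∀ X Y, Q X → Q Y → Q (X ⊞ Y))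
    (hsmd : ∀ X Y, IsSummand X Y → Q Y → Q X) : ∀ X ∈ angle I, Q X := by
  intro X hX
  induction (hX : angleMem I X) with
  | of h => exact hI _ h
  | zero h => exact hz _ h
  | shift n _ ih => exact hshift _ _ ih
  | sum h1 h2 ih1 ih2 => exact hsum _ _ ih1 ih2
  | smd h h2 ih => exact hsmd _ _ h ih
  | iso e h2 ih => exact hsmd _ _ ⟨e.inv, e.hom, e.inv_hom_id⟩ ih

theorem angleN_induct (H : C) (Q : C → Prop) (hH : Q H) (hz : ∀ X, IsZero X → Q X)
    (hshift : ∀ X (n : ℤ), Q X → Q (X⟦n⟧))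
    (hsmd : ∀ X Y, IsSummand X Y → Q Y → Q X)
    (htri : ∀ T ∈ distTriang C, Q T.obj₁ → Q T.obj₃ → Q T.obj₂) :
    ∀ n, ∀ X ∈ angleN {H} n, Q X := by
  have hsum : ∀ X Y, Q X → Q Y → Q (X ⊞ Y) := fun X Y hX hY =>
    htri _ (binaryBiproductTriangle_distinguished X Y) hX hY
  have h1 : ∀ X ∈ angle {H}, Q X :=
    angle_induct _ Q (by rintro _ rfl; exact hH) hz hshift hsum hsmd
  intro n
  induction n using Nat.strong_induction_on with
  | _ n ih =>
    match n with
    | 0 => intro X hX; exact hX.elim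
    | 1 => exact h1
    | n + 2 =>
      apply angle_induct _ Q _ hz hshift hsum hsmd
      rintro X ⟨K₀, K₁, f, g, h, hT, h0, hK1⟩
      exact htri _ hT (ih (n+1) (by omega) _ h0) (h1 _ hK1)

/-! ### Shifts of an object -/

/-- `Y` is isomorphic to a shift of `H`. -/
def InS (H Y : C) : Prop := ∃ n : ℤ, Nonempty (Y ≅ H⟦n⟧)

theorem InS.self (H : C) : InS H H := ⟨0, ⟨((shiftFunctorZero C ℤ).app H).symm⟩⟩

theorem InS.shift {H Y : C} (h : InS H Y) (j : ℤ) : InS H (Y⟦j⟧) := by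
  obtain ⟨n, ⟨e⟩⟩ := h
  exact ⟨n + j, ⟨(shiftFunctor C j).mapIso e ≪≫ (shiftFunctorAdd C n j).symm.app H⟩⟩

theorem exists_shift_left {Z X : C} (j : ℤ) (a : Z ⟶ X⟦j⟧) :
    ∃ b : Z⟦-j⟧ ⟶ X, a = (shiftNegShift Z j).inv ≫ b⟦j⟧' := by
  obtain ⟨b, hb⟩ := (shiftFunctor C j).map_surjective ((shiftNegShift Z j).hom ≫ a)
  exact ⟨b, by rw [hb, Iso.inv_hom_id_assoc]⟩

theorem exists_shift_right {Z X : C} (j : ℤ) (a : X⟦j⟧ ⟶ Z) :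
    ∃ b : X ⟶ Z⟦-j⟧, a = b⟦j⟧' ≫ (shiftNegShift Z j).hom := by
  obtain ⟨b, hb⟩ := (shiftFunctor C j).map_surjective (a ≫ (shiftNegShift Z j).inv)
  exact ⟨b, by rw [hb, Category.assoc, Iso.inv_hom_id, Category.comp_id]⟩

/-! ### Ghosts -/

/-- `f` is an `H`-ghost. -/
def Ghost (H : C) {X Y : C} (f : X ⟶ Y) : Prop := ∀ Z, InS H Z → ∀ a : Z ⟶ X, a ≫ f = 0

/-- `f` is a composite of `n` ghosts. -/
def GhostPow (H : C) : ℕ → ∀ X Y : C, (X ⟶ Y) → Prop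
  | 0, _, _, _ => True
  | n + 1, X, Y, f => ∃ (Z : C) (u : X ⟶ Z) (v : Z ⟶ Y), GhostPow H n X Z u ∧ Ghost H v ∧ u ≫ v = f

theorem Ghost.shift {H : C} {X Y : C} {f : X ⟶ Y} (h : Ghost H f) (j : ℤ) :
    Ghost H (f⟦j⟧') := by
  intro Z hZ a
  obtain ⟨b, rfl⟩ := exists_shift_left j a
  rw [Category.assoc, ← Functor.map_comp, h _ (hZ.shift _), Functor.map_zero, comp_zero]

theorem GhostPow.shift {H : C} (n : ℕ) : ∀ {X Y : C} {f : X ⟶ Y} (_ : GhostPow H n X Y f) (j : ℤ),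
    GhostPow H n _ _ (f⟦j⟧') := by
  induction n with
  | zero => intros; trivial
  | succ n ih =>
    rintro X Y f ⟨Z, u, v, hu, hv, rfl⟩ j
    exact ⟨_, u⟦j⟧', v⟦j⟧', ih hu j, hv.shift j, by rw [Functor.map_comp]⟩

theorem GhostPow.precomp {H : C} (n : ℕ) : ∀ {W X Y : C} {f : X ⟶ Y} (w : W ⟶ X)
    (_ : GhostPow H n X Y f), GhostPow H n _ _ (w ≫ f) := by
  induction n with
  | zero => intros; trivial
  | succ n ih =>
    rintro W X Y f w ⟨Z, u, v, hu, hv, rfl⟩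
    exact ⟨_, w ≫ u, v, ih w hu, hv, by rw [Category.assoc]⟩

theorem GhostPow.postcomp {H : C} (n : ℕ) {X Y W : C} {f : X ⟶ Y}
    (h : GhostPow H n X Y f) (w : Y ⟶ W) : GhostPow H n _ _ (f ≫ w) := by
  cases n with
  | zero => trivial
  | succ n =>
    obtain ⟨Z, u, v, hu, hv, rfl⟩ := h
    refine ⟨_, u, v ≫ w, hu, ?_, by rw [Category.assoc]⟩
    intro A hA a
    rw [← Category.assoc, hv A hA, zero_comp]

theorem GhostPow.cons {H : C} (n : ℕ) : ∀ {X Y W : C} {u : X ⟶ Y} {v : Y ⟶ W}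
    (_ : Ghost H u) (_ : GhostPow H n Y W v), GhostPow H (n + 1) _ _ (u ≫ v) := by
  induction n with
  | zero =>
    intro X Y W u v hu _
    refine ⟨_, 𝟙 X, u ≫ v, trivial, ?_, by simp⟩
    intro A hA a
    rw [← Category.assoc, hu A hA, zero_comp]
  | succ n ih =>
    rintro X Y W u _ hu ⟨Z, v₁, v₂, h1, h2, rfl⟩
    exact ⟨Z, u ≫ v₁, v₂, ih hu h1, h2, by rw [Category.assoc]⟩

theorem GhostPow.mono {H : C} {n m : ℕ} (hmn : n ≤ m) : ∀ {X Y : C} {f : X ⟶ Y}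
    (_ : GhostPow H m X Y f), GhostPow H n X Y f := by
  induction hmn with
  | refl => intro X Y f h; exact h
  | step _ ih =>
    rintro X Y f ⟨Z, u, v, h1, h2, rfl⟩
    exact (ih h1).postcomp _ v

section Tri

variable {X Y Z W : C} {f : X ⟶ Y} {g : Y ⟶ Z} {h : Z ⟶ X⟦(1 : ℤ)⟧}

theorem tri_12 (hT : Triangle.mk f g h ∈ distTriang C) : f ≫ g = 0 :=
  comp_distTriang_mor_zero₁₂ _ hT

theorem tri_23 (hT : Triangle.mk f g h ∈ distTriang C) : g ≫ h = 0 :=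
  comp_distTriang_mor_zero₂₃ _ hT

theorem tri_31 (hT : Triangle.mk f g h ∈ distTriang C) : h ≫ f⟦(1 : ℤ)⟧' = 0 :=
  comp_distTriang_mor_zero₃₁ _ hT

theorem tri_y2 (hT : Triangle.mk f g h ∈ distTriang C) (u : Y ⟶ W) (hu : f ≫ u = 0) :
    ∃ w : Z ⟶ W, u = g ≫ w := Triangle.yoneda_exact₂ _ hT u hu

theorem tri_y3 (hT : Triangle.mk f g h ∈ distTriang C) (u : Z ⟶ W) (hu : g ≫ u = 0) :
    ∃ w : X⟦(1 : ℤ)⟧ ⟶ W, u = h ≫ w := Triangle.yoneda_exact₃ _ hT u hu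

theorem tri_y3rot (hT : Triangle.mk f g h ∈ distTriang C) (u : X⟦(1 : ℤ)⟧ ⟶ W)
    (hu : h ≫ u = 0) : ∃ w : Y⟦(1 : ℤ)⟧ ⟶ W, u = (-f⟦(1 : ℤ)⟧') ≫ w :=
  Triangle.yoneda_exact₃ _ (rot_of_distTriang _ hT) u hu

theorem tri_c2 (hT : Triangle.mk f g h ∈ distTriang C) (u : W ⟶ Y) (hu : u ≫ g = 0) :
    ∃ w : W ⟶ X, u = w ≫ f := Triangle.coyoneda_exact₂ _ hT u hu

theorem tri_c3 (hT : Triangle.mk f g h ∈ distTriang C) (u : W ⟶ Z) (hu : u ≫ h = 0) :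
    ∃ w : W ⟶ Y, u = w ≫ g := Triangle.coyoneda_exact₃ _ hT u hu

end Tri

theorem ghost_lemma (H : C) (n : ℕ) : ∀ X ∈ angleN {H} n,
    ∀ (Y : C) (f : X ⟶ Y), GhostPow H n X Y f → f = 0 := by
  have key : ∀ (n : ℕ) (I : Set C), (∀ X ∈ I, ∀ (Y : C) (f : X ⟶ Y), GhostPow H n X Y f → f = 0) →
      ∀ X ∈ angle I, ∀ (Y : C) (f : X ⟶ Y), GhostPow H n X Y f → f = 0 := by
    intro n I hI
    apply angle_induct I (fun X => ∀ (Y : C) (f : X ⟶ Y), GhostPow H n X Y f → f = 0) hI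
    · intro X hX Y f _
      exact hX.eq_of_src _ _
    · intro X j hX Y f hf
      obtain ⟨b, hb⟩ := exists_shift_right j f
      have h1 : GhostPow H n _ _ (b⟦j⟧') := by
        have := hf.postcomp n (shiftNegShift Y j).inv
        rw [hb, Category.assoc, Iso.hom_inv_id, Category.comp_id] at this
        exact this
      have h2 := (h1.shift n (-j)).precomp n ((shiftShiftNeg X j).inv)
      have h3 := h2.postcomp n ((shiftShiftNeg _ j).hom)
      have h4 : ((shiftShiftNeg X j).inv ≫ b⟦j⟧'⟦-j⟧') ≫ (shiftShiftNeg _ j).hom = b := by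
        rw [Category.assoc]
        exact shiftFunctorCompIsoId_naturality_1 b j (-j) (add_neg_cancel j)
      rw [h4] at h3
      rw [hb, hX _ _ h3, Functor.map_zero, zero_comp]
    · intro X Y hX hY Z f hf
      ext
      · rw [comp_zero]; exact hX _ _ (hf.precomp n _)
      · rw [comp_zero]; exact hY _ _ (hf.precomp n _)
    · rintro X Y ⟨r, k, hrk⟩ hY Z f hf
      rw [← Category.id_comp f, ← hrk, Category.assoc, hY _ _ (hf.precomp n k), comp_zero]
  have h1 : ∀ X ∈ angle {H}, ∀ (Y : C) (f : X ⟶ Y), GhostPow H 1 X Y f → f = 0 := by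
    apply key
    rintro _ rfl Y f ⟨Z, u, v, _, hv, rfl⟩
    exact hv _ (InS.self _) u
  induction n using Nat.strong_induction_on with
  | _ n ih =>
    match n with
    | 0 => intro X hX; exact hX.elim
    | 1 => exact h1
    | n + 2 =>
      apply key
      rintro X ⟨K₀, K₁, f, g, h, hT, h0, hK1⟩ Y q ⟨Z, u, v, hu, hv, rfl⟩
      have hu0 : f ≫ u = 0 := ih (n+1) (by omega) _ h0 _ _ (hu.precomp _ f)
      obtain ⟨w, hw⟩ := tri_y2 hT u hu0
      have : w ≫ v = 0 := h1 _ hK1 _ _ ⟨Z, w, v, trivial, hv, rfl⟩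
      rw [hw, Category.assoc, this, comp_zero]

/-! ### The Koszul construction -/

section Koszul

variable {P : Type*} [CommRing P] [Linear P C] [∀ n : ℤ, (shiftFunctor C n).Linear P]

/-- Invariants of the Koszul tower. -/
structure Stage (H : C) (g : P) (J : Ideal P) (i : ℕ) {K B : C} (a : H ⟶ K) (b : K ⟶ B) :
    Prop where
  hB : InS H B
  E : ∃ e : ℕ, ∀ Y, InS H Y → ∀ φ : Y ⟶ K, ∃ ψ : Y ⟶ H, g ^ e • φ = ψ ≫ a
  F : ∃ e : ℕ, ∀ Y, InS H Y → ∀ ψ : Y ⟶ H, ψ ≫ a = 0 →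
    g ^ e • ψ ∈ J • (⊤ : Submodule P (Y ⟶ H))
  Z : ∀ r ∈ J, r • a = 0
  E' : ∃ e : ℕ, ∀ Y, InS H Y → ∀ φ : K ⟶ Y, ∃ ψ : B ⟶ Y, g ^ e • φ = b ≫ ψ
  F' : ∃ e : ℕ, ∀ Y, InS H Y → ∀ ψ : B ⟶ Y, b ≫ ψ = 0 →
    g ^ e • ψ ∈ J • (⊤ : Submodule P (B ⟶ Y))
  Z' : ∀ r ∈ J, r • b = 0
  gh : ∃ N : ℕ, GhostPow H i K B (g ^ N • b)

theorem Stage.zero (H : C) (g : P) : Stage H g (⊥ : Ideal P) 0 (𝟙 H) (𝟙 H) where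
  hB := InS.self H
  E := ⟨0, fun Y _ φ => ⟨φ, by simp⟩⟩
  F := ⟨0, fun Y _ ψ h => by
    rw [Category.comp_id] at h; rw [h, smul_zero]; exact Submodule.zero_mem _⟩
  Z := fun r hr => by rw [Ideal.mem_bot.mp hr, zero_smul]
  E' := ⟨0, fun Y _ φ => ⟨φ, by simp⟩⟩
  F' := ⟨0, fun Y _ ψ h => by
    rw [Category.id_comp] at h; rw [h, smul_zero]; exact Submodule.zero_mem _⟩
  Z' := fun r hr => by rw [Ideal.mem_bot.mp hr, zero_smul]
  gh := ⟨0, trivial⟩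

theorem smul_top_comp {J : Ideal P} {X Y Z : C} {a : Y ⟶ Z} (ha : ∀ r ∈ J, r • a = 0)
    {ψ : X ⟶ Y} (h : ψ ∈ J • (⊤ : Submodule P (X ⟶ Y))) : ψ ≫ a = 0 := by
  refine Submodule.smul_induction_on h ?_ ?_
  · intro r hr n _
    rw [Linear.smul_comp, ← Linear.comp_smul, ha r hr, comp_zero]
  · intro x y hx hy
    rw [Preadditive.add_comp, hx, hy, add_zero]

theorem comp_smul_top {J : Ideal P} {X Y Z : C} {b : X ⟶ Y} (hb : ∀ r ∈ J, r • b = 0)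
    {ψ : Y ⟶ Z} (h : ψ ∈ J • (⊤ : Submodule P (Y ⟶ Z))) : b ≫ ψ = 0 := by
  refine Submodule.smul_induction_on h ?_ ?_
  · intro r hr n _
    rw [Linear.comp_smul, ← Linear.smul_comp, hb r hr, zero_comp]
  · intro x y hx hy
    rw [Preadditive.comp_add, hx, hy, add_zero]

theorem Stage.step {H : C} {g x : P} {J : Ideal P} {i : ℕ} {K B : C} {a : H ⟶ K} {b : K ⟶ B}
    (h : Stage H g J i a b)
    (hreg : ∀ Y Y', InS H Y → InS H Y' → ∀ ψ : Y ⟶ Y', x • ψ ∈ J • (⊤ : Submodule P (Y ⟶ Y')) →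
      g • ψ ∈ J • (⊤ : Submodule P (Y ⟶ Y'))) :
    ∃ (K' B' : C) (a' : H ⟶ K') (b' : K' ⟶ B'),
      Stage H g (Ideal.span {x} ⊔ J) (i + 1) a' b' := by
  obtain ⟨hB, ⟨e, E⟩, ⟨f, F⟩, Z, ⟨e', E'⟩, ⟨f', F'⟩, Z', ⟨N, gh⟩⟩ := h
  -- torsion statements
  have tor : ∀ Y, InS H Y → ∀ θ : Y ⟶ K, x • θ = 0 → g ^ (f + 1 + e) • θ = 0 := by
    intro Y hY θ hθ
    obtain ⟨ψ, hψ⟩ := E Y hY θ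
    have h1 : (x • ψ) ≫ a = 0 := by
      rw [Linear.smul_comp, ← hψ, smul_comm, hθ, smul_zero]
    have h2 := F Y hY _ h1
    rw [smul_comm] at h2
    have h3 := hreg _ _ hY (InS.self H) _ h2
    have h4 := smul_top_comp Z h3
    rw [Linear.smul_comp, Linear.smul_comp, ← hψ, smul_smul, smul_smul] at h4
    rw [← h4]; congr 1; ring
  have tor1 : ∀ Y, InS H Y → ∀ θ : Y ⟶ K⟦(1 : ℤ)⟧, x • θ = 0 → g ^ (f + 1 + e) • θ = 0 := by
    intro Y hY θ hθ
    obtain ⟨c, rfl⟩ := exists_shift_left 1 θ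
    have h1 : x • c = 0 := by
      apply (shiftFunctor C (1 : ℤ)).map_injective
      rw [Functor.map_smul, Functor.map_zero, ← cancel_epi (shiftNegShift Y (1 : ℤ)).inv,
        Linear.comp_smul, hθ, comp_zero]
    rw [← Linear.comp_smul, ← Functor.map_smul, tor _ (hY.shift _) c h1, Functor.map_zero,
      comp_zero]
  have tor' : ∀ Y, InS H Y → ∀ θ : K ⟶ Y, x • θ = 0 → g ^ (f' + 1 + e') • θ = 0 := by
    intro Y hY θ hθ
    obtain ⟨ψ, hψ⟩ := E' Y hY θ
    have h1 : b ≫ (x • ψ) = 0 := by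
      rw [Linear.comp_smul, ← hψ, smul_comm, hθ, smul_zero]
    have h2 := F' Y hY _ h1
    rw [smul_comm] at h2
    have h3 := hreg _ _ hB hY _ h2
    have h4 := comp_smul_top Z' h3
    rw [Linear.comp_smul, Linear.comp_smul, ← hψ, smul_smul, smul_smul] at h4
    rw [← h4]; congr 1; ring
  -- shifted contravariant statements
  have E1 : ∀ Y, InS H Y → ∀ φ : K⟦(1 : ℤ)⟧ ⟶ Y, ∃ ψ : B⟦(1 : ℤ)⟧ ⟶ Y,
      g ^ e' • φ = b⟦(1 : ℤ)⟧' ≫ ψ := by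
    intro Y hY φ
    obtain ⟨c, rfl⟩ := exists_shift_right 1 φ
    obtain ⟨ψ, hψ⟩ := E' _ (hY.shift _) c
    refine ⟨ψ⟦(1 : ℤ)⟧' ≫ (shiftNegShift Y (1 : ℤ)).hom, ?_⟩
    rw [← Category.assoc, ← Functor.map_comp, ← hψ, Functor.map_smul, Linear.smul_comp]
  have F1 : ∀ Y, InS H Y → ∀ ψ : B⟦(1 : ℤ)⟧ ⟶ Y, b⟦(1 : ℤ)⟧' ≫ ψ = 0 →
      g ^ f' • ψ ∈ J • (⊤ : Submodule P (B⟦(1 : ℤ)⟧ ⟶ Y)) := by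
    intro Y hY ψ hψ
    obtain ⟨c, rfl⟩ := exists_shift_right 1 ψ
    have h1 : b ≫ c = 0 := by
      apply (shiftFunctor C (1 : ℤ)).map_injective
      rw [Functor.map_comp, Functor.map_zero, ← cancel_mono (shiftNegShift Y (1 : ℤ)).hom,
        Category.assoc, hψ, zero_comp]
    have h2 := F' _ (hY.shift _) c h1
    have h3 := map_mem_smul_top J ((shiftFunctor C (1 : ℤ)).mapLinearMap P) h2
    have h4 := map_mem_smul_top J (Linear.rightComp P _ (shiftNegShift Y (1 : ℤ)).hom) h3
    rw [map_smul, map_smul] at h4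
    exact h4
  obtain ⟨K', p, δ, hT⟩ := distinguished_cocone_triangle (x • 𝟙 K)
  have hp : x • p = 0 := by
    have := tri_12 hT
    rwa [Linear.smul_comp, Category.id_comp] at this
  have hδ : x • δ = 0 := by
    have := tri_31 hT
    rwa [Functor.map_smul, CategoryTheory.Functor.map_id, Linear.comp_smul,
      Category.comp_id] at this
  have hmem : ∀ {M : C} {M' : C} (c : M ⟶ M'), x • c = 0 → (∀ r ∈ J, r • c = 0) →
      ∀ r ∈ Ideal.span {x} ⊔ J, r • c = 0 := by
    intro M M' c hc hJ r hr
    obtain ⟨s, hs, t, ht, rfl⟩ := Submodule.mem_sup.mp hr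
    obtain ⟨q, rfl⟩ := Ideal.mem_span_singleton'.mp hs
    rw [add_smul, mul_smul, hc, smul_zero, hJ t ht, add_zero]
  have hle : ∀ (M M' : C) (c : M ⟶ M'), c ∈ J • (⊤ : Submodule P (M ⟶ M')) →
      c ∈ (Ideal.span {x} ⊔ J) • (⊤ : Submodule P (M ⟶ M')) := fun M M' c hc =>
    Submodule.smul_mono_left le_sup_right hc
  have hx : ∀ (M M' : C) (c : M ⟶ M'),
      x • c ∈ (Ideal.span {x} ⊔ J) • (⊤ : Submodule P (M ⟶ M')) := fun M M' c =>
    Submodule.smul_mem_smul ((le_sup_left : _ ≤ Ideal.span {x} ⊔ J)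
      (Ideal.mem_span_singleton_self x)) trivial
  refine ⟨K', B⟦(1 : ℤ)⟧, a ≫ p, δ ≫ b⟦(1 : ℤ)⟧', ⟨hB.shift 1, ?_, ?_, ?_, ?_, ?_, ?_, ?_⟩⟩
  · refine ⟨e + (f + 1 + e), fun Y hY φ => ?_⟩
    have h1 : (g ^ (f + 1 + e) • φ) ≫ δ = 0 := by
      rw [Linear.smul_comp]
      apply tor1 Y hY
      rw [← Linear.comp_smul, hδ, comp_zero]
    obtain ⟨φ', hφ'⟩ := tri_c3 hT _ h1
    obtain ⟨ψ, hψ⟩ := E Y hY φ'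
    refine ⟨ψ, ?_⟩
    rw [pow_add, mul_smul, hφ', ← Linear.smul_comp, hψ, Category.assoc]
  · refine ⟨f + e, fun Y hY ψ hψ => ?_⟩
    rw [← Category.assoc] at hψ
    obtain ⟨θ, hθ⟩ := tri_c2 hT _ hψ
    rw [Linear.comp_smul, Category.comp_id] at hθ
    obtain ⟨θ', hθ'⟩ := E Y hY θ
    have h1 : (g ^ e • ψ - x • θ') ≫ a = 0 := by
      rw [Preadditive.sub_comp, Linear.smul_comp, Linear.smul_comp, hθ, ← hθ', smul_comm, sub_self]
    have h2 := Submodule.add_mem _ (hle _ _ _ (F Y hY _ h1)) (hx _ _ (g ^ f • θ'))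
    rw [smul_sub, smul_comm x, sub_add_cancel, smul_smul, ← pow_add] at h2
    exact h2
  · apply hmem
    · rw [← Linear.comp_smul, hp, comp_zero]
    · intro r hr
      rw [← Linear.smul_comp, Z r hr, zero_comp]
  · refine ⟨e' + (f' + 1 + e'), fun Y hY φ => ?_⟩
    have h1 : p ≫ (g ^ (f' + 1 + e') • φ) = 0 := by
      rw [Linear.comp_smul]
      apply tor' Y hY
      rw [← Linear.smul_comp, hp, zero_comp]
    obtain ⟨θ, hθ⟩ := tri_y3 hT _ h1
    obtain ⟨ψ, hψ⟩ := E1 Y hY θ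
    refine ⟨ψ, ?_⟩
    rw [pow_add, mul_smul, hθ, ← Linear.comp_smul, hψ, Category.assoc]
  · refine ⟨f' + e', fun Y hY ψ hψ => ?_⟩
    rw [Category.assoc] at hψ
    obtain ⟨θ, hθ⟩ := tri_y3rot hT _ hψ
    rw [Functor.map_smul, CategoryTheory.Functor.map_id, Preadditive.neg_comp, ← Preadditive.comp_neg,
      Linear.smul_comp, Category.id_comp] at hθ
    obtain ⟨θ', hθ'⟩ := E1 Y hY (-θ)
    have h1 : b⟦(1 : ℤ)⟧' ≫ (g ^ e' • ψ - x • θ') = 0 := by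
      rw [Preadditive.comp_sub, Linear.comp_smul, Linear.comp_smul, hθ, ← hθ', smul_comm, sub_self]
    have h2 := Submodule.add_mem _ (hle _ _ _ (F1 Y hY _ h1)) (hx _ _ (g ^ f' • θ'))
    rw [smul_sub, smul_comm x, sub_add_cancel, smul_smul, ← pow_add] at h2
    exact h2
  · apply hmem
    · rw [← Linear.smul_comp, hδ, zero_comp]
    · intro r hr
      rw [← Linear.comp_smul, ← Functor.map_smul, Z' r hr, Functor.map_zero, comp_zero]
  · refine ⟨N + (f + 1 + e), ?_⟩
    have h1 : Ghost H (g ^ (f + 1 + e) • δ) := by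
      intro Y hY c
      rw [Linear.comp_smul]
      apply tor1 Y hY
      rw [← Linear.comp_smul, hδ, comp_zero]
    have h2 := GhostPow.cons i h1 (gh.shift i (1 : ℤ))
    rw [Functor.map_smul, Linear.comp_smul, Linear.smul_comp, smul_smul, ← pow_add] at h2
    exact h2

theorem Stage.tower {H : C} {g : P} (x : ℕ → P) (d : ℕ)
    (hreg : ∀ i < d, ∀ Y Y', InS H Y → InS H Y' → ∀ ψ : Y ⟶ Y',
      x i • ψ ∈ Ideal.span (x '' Set.Iio i) • (⊤ : Submodule P (Y ⟶ Y')) →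
      g • ψ ∈ Ideal.span (x '' Set.Iio i) • (⊤ : Submodule P (Y ⟶ Y'))) :
    ∀ i ≤ d, ∃ (K B : C) (a : H ⟶ K) (b : K ⟶ B),
      Stage H g (Ideal.span (x '' Set.Iio i)) i a b := by
  intro i
  induction i with
  | zero =>
    intro _
    refine ⟨H, H, 𝟙 H, 𝟙 H, ?_⟩
    have := Stage.zero H g
    simpa using this
  | succ i ih =>
    intro hi
    obtain ⟨K, B, a, b, hs⟩ := ih (by omega)
    have := hs.step (x := x i) (hreg i (by omega))
    have e1 : Set.Iio (i+1) = insert i (Set.Iio i) := by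
      ext z; simp only [Set.mem_Iio, Set.mem_insert_iff]; omega
    rw [e1, Set.image_insert_eq, Ideal.span_insert]
    exact this

/-- Homs between shifts of `H`. -/
theorem exists_homEquiv {H Y B : C} (hY : InS H Y) (hB : InS H B) :
    ∃ n : ℤ, Nonempty ((H ⟶ H⟦n⟧) ≃ₗ[P] (Y ⟶ B)) := by
  obtain ⟨a, ⟨e₁⟩⟩ := hY
  obtain ⟨b, ⟨e₂⟩⟩ := hB
  refine ⟨b - a, ⟨?_⟩⟩
  let e₃ : H⟦b - a⟧⟦a⟧ ≅ H⟦b⟧ := ((shiftFunctorAdd' C (b - a) a b (by omega)).app H).symm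
  exact (LinearEquiv.ofBijective ((shiftFunctor C a).mapLinearMap P)
    ⟨(shiftFunctor C a).map_injective, (shiftFunctor C a).map_surjective⟩).trans
    (Linear.homCongr P e₁.symm (e₃ ≪≫ e₂.symm))

end Koszul

theorem core {k : Type*} [Field k] {d : ℕ} [Linear (MvPolynomial (Fin d) k) C]
    [∀ n : ℤ, (shiftFunctor C n).Linear (MvPolynomial (Fin d) k)] (H : C)
    (hfin : ∀ n : ℤ, Module.Finite (MvPolynomial (Fin d) k) (H ⟶ H⟦n⟧))
    (hper : ∃ F : Finset ℤ, ∀ n : ℤ, (∀ f : H ⟶ H⟦n⟧, f = 0) ∨ ∃ n' ∈ F, Nonempty (H⟦n⟧ ≅ H⟦n'⟧))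
    (hfaith : ∀ p : MvPolynomial (Fin d) k, p • 𝟙 H = 0 → p = 0)
    (n : ℕ) (hn : angleN {H} n = Set.univ) : d < n := by
  by_contra hdn
  push Not at hdn
  obtain ⟨F, hF⟩ := hper
  choose q hq0 hq using fun n : ℤ => exists_almostFree (P := MvPolynomial (Fin d) k) (H ⟶ H⟦n⟧)
  let g : MvPolynomial (Fin d) k := ∏ n ∈ F, q n
  have hg0 : g ≠ 0 := Finset.prod_ne_zero_iff.mpr fun n _ => hq0 n
  have hgF : ∀ n ∈ F, AlmostFree g (H ⟶ H⟦n⟧) := by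
    intro n hn
    have := (hq n).mul (∏ j ∈ F.erase n, q j)
    rwa [Finset.prod_erase_mul _ _ hn] at this
  have hgn : ∀ n : ℤ, AlmostFree g (H ⟶ H⟦n⟧) := by
    intro n
    rcases hF n with h | ⟨n', hn', ⟨e⟩⟩
    · exact AlmostFree.of_zero g h
    · exact (hgF n' hn').equiv (Linear.homCongr _ (Iso.refl H) e.symm)
  have hgS : ∀ Y B, InS H Y → InS H B → AlmostFree g (Y ⟶ B) := by
    intro Y B hY hB
    obtain ⟨n, ⟨e⟩⟩ := exists_homEquiv (P := MvPolynomial (Fin d) k) hY hB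
    exact (hgn n).equiv e
  obtain ⟨x, hx, hxn⟩ := GoodRing.mv d k g (by rwa [isNilpotent_iff_eq_zero])
  obtain ⟨K, B, a, b, hs⟩ := Stage.tower (H := H) (g := g) x d
    (fun i hi Y Y' hY hY' ψ hψ => (hgS Y Y' hY hY').reg (hx i hi) ψ hψ) d le_rfl
  obtain ⟨N, hN⟩ := hs.gh
  have h0 : g ^ N • b = 0 :=
    ghost_lemma H n K (by rw [hn]; trivial) _ _ (hN.mono hdn)
  obtain ⟨f', hf'⟩ := hs.F'
  have h1 := hf' B hs.hB (g ^ N • 𝟙 B) (by rw [Linear.comp_smul, Category.comp_id, h0])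
  rw [smul_smul, ← pow_add] at h1
  refine (hgS B B hs.hB hs.hB).nonvanish hxn (m₀ := 𝟙 B) ?_ (f' + N) ?_
  · intro h2
    apply hg0
    apply hfaith
    obtain ⟨j, ⟨e⟩⟩ := hs.hB
    apply (shiftFunctor C j).map_injective
    rw [Functor.map_zero, Functor.map_smul, CategoryTheory.Functor.map_id]
    have : e.inv ≫ (g • 𝟙 B) ≫ e.hom = g • 𝟙 _ := by simp
    rw [← this, h2, zero_comp, comp_zero]
  · intro m
    have h3 := map_mem_smul_top _ (Linear.rightComp (MvPolynomial (Fin d) k) _ m) h1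
    simpa using h3


/-! ### Finiteness of all Hom modules -/

section Noeth

variable [Linear R C] [∀ n : ℤ, (shiftFunctor C n).Linear R]

theorem noeth_left {G : C} (hb : ∀ n : ℤ, IsNoetherian R (G ⟶ G⟦n⟧)) (n : ℕ) :
    ∀ X ∈ angleN {G} n, ∀ Z, InS G Z → IsNoetherian R (X ⟶ Z) := by
  apply angleN_induct G (fun X => ∀ Z, InS G Z → IsNoetherian R (X ⟶ Z))
  · intro Z hZ
    obtain ⟨n, ⟨e⟩⟩ := exists_homEquiv (P := R) (InS.self G) hZ
    have := hb n
    exact isNoetherian_of_linearEquiv e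
  · intro X hX Z _
    have : Subsingleton (X ⟶ Z) := ⟨fun a b => hX.eq_of_src _ _⟩
    infer_instance
  · intro X j hX Z hZ
    have := hX _ (hZ.shift (-j))
    apply isNoetherian_of_surjective (M := (X ⟶ Z⟦-j⟧)) (P := (X⟦j⟧ ⟶ Z))
      ((Linear.rightComp R _ (shiftNegShift Z j).hom).comp ((shiftFunctor C j).mapLinearMap R))
    rw [LinearMap.range_eq_top]
    intro a
    obtain ⟨b, hb⟩ := exists_shift_right j a
    exact ⟨b, hb.symm⟩
  · rintro X Y ⟨r, k, hrk⟩ hY Z hZ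
    have := hY Z hZ
    apply isNoetherian_of_surjective (M := (Y ⟶ Z)) (P := (X ⟶ Z)) (Linear.leftComp R Z r)
    rw [LinearMap.range_eq_top]
    intro a
    exact ⟨k ≫ a, by rw [Linear.leftComp_apply, ← Category.assoc, hrk, Category.id_comp]⟩
  · intro T hT h1 h3 Z hZ
    have := h1 Z hZ
    have := h3 Z hZ
    apply isNoetherian_of_range_eq_ker (Linear.leftComp R Z T.mor₂) (Linear.leftComp R Z T.mor₁)
    ext a
    simp only [LinearMap.mem_range, LinearMap.mem_ker, Linear.leftComp_apply]
    constructor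
    · rintro ⟨b, rfl⟩
      rw [← Category.assoc, comp_distTriang_mor_zero₁₂ _ hT, zero_comp]
    · intro h
      obtain ⟨b, hb⟩ := Triangle.yoneda_exact₂ _ hT a h
      exact ⟨b, hb.symm⟩

theorem noeth_all {G : C} (hb : ∀ n : ℤ, IsNoetherian R (G ⟶ G⟦n⟧)) (n : ℕ)
    (hn : angleN {G} n = Set.univ) (X : C) :
    ∀ Y, IsNoetherian R (X ⟶ Y) := by
  have h0 : ∀ X : C, X ∈ angleN {G} n := fun X => by rw [hn]; trivial
  suffices h : ∀ Y ∈ angleN {G} n, ∀ X, IsNoetherian R (X ⟶ Y) from fun Y => h Y (h0 Y) X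
  apply angleN_induct G (fun Y => ∀ X, IsNoetherian R (X ⟶ Y))
  · intro X
    exact noeth_left hb n X (h0 X) G (InS.self G)
  · intro X hX Z
    have : Subsingleton (Z ⟶ X) := ⟨fun a b => hX.eq_of_tgt _ _⟩
    infer_instance
  · intro Y j hY X
    have := hY (X⟦-j⟧)
    apply isNoetherian_of_surjective (M := (X⟦-j⟧ ⟶ Y)) (P := (X ⟶ Y⟦j⟧))
      ((Linear.leftComp R _ (shiftNegShift X j).inv).comp ((shiftFunctor C j).mapLinearMap R))
    rw [LinearMap.range_eq_top]
    intro a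
    obtain ⟨b, hb⟩ := exists_shift_left j a
    exact ⟨b, hb.symm⟩
  · rintro X Y ⟨r, k, hrk⟩ hY Z
    have := hY Z
    apply isNoetherian_of_surjective (M := (Z ⟶ Y)) (P := (Z ⟶ X)) (Linear.rightComp R Z k)
    rw [LinearMap.range_eq_top]
    intro a
    exact ⟨a ≫ r, by rw [Linear.rightComp_apply, Category.assoc, hrk, Category.comp_id]⟩
  · intro T hT h1 h3 Z
    have := h1 Z
    have := h3 Z
    apply isNoetherian_of_range_eq_ker (Linear.rightComp R Z T.mor₁) (Linear.rightComp R Z T.mor₂)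
    ext a
    simp only [LinearMap.mem_range, LinearMap.mem_ker, Linear.rightComp_apply]
    constructor
    · rintro ⟨b, rfl⟩
      rw [Category.assoc, comp_distTriang_mor_zero₁₂ _ hT, comp_zero]
    · intro h
      obtain ⟨b, hb⟩ := Triangle.coyoneda_exact₂ _ hT a h
      exact ⟨b, hb.symm⟩

theorem nilp_all {H : C} {r : R} (hr : r • 𝟙 H = 0) (n : ℕ) :
    ∀ X ∈ angleN {H} n, ∃ e : ℕ, r ^ e • 𝟙 X = 0 := by
  apply angleN_induct H (fun X => ∃ e : ℕ, r ^ e • 𝟙 X = 0)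
  · exact ⟨1, by rw [pow_one, hr]⟩
  · intro X hX
    exact ⟨0, hX.eq_of_src _ _⟩
  · rintro X j ⟨e, he⟩
    refine ⟨e, ?_⟩
    rw [← CategoryTheory.Functor.map_id, ← Functor.map_smul, he, Functor.map_zero]
  · rintro X Y ⟨a, b, hab⟩ ⟨e, he⟩
    refine ⟨e, ?_⟩
    have : a ≫ (r ^ e • 𝟙 Y) ≫ b = r ^ e • 𝟙 X := by
      rw [Linear.smul_comp, Category.id_comp, Linear.comp_smul, hab]
    rw [← this, he, zero_comp, comp_zero]
  · rintro T hT ⟨e1, h1⟩ ⟨e3, h3⟩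
    refine ⟨e1 + e3, ?_⟩
    have h2 : (r ^ e3 • 𝟙 T.obj₂) ≫ T.mor₂ = 0 := by
      rw [Linear.smul_comp, Category.id_comp, ← Category.comp_id T.mor₂, ← Linear.comp_smul, h3,
        comp_zero]
    obtain ⟨w, hw⟩ := Triangle.coyoneda_exact₂ _ hT _ h2
    have h4 : w ≫ (r ^ e1 • 𝟙 T.obj₁) ≫ T.mor₁ = r ^ e1 • (w ≫ T.mor₁) := by
      rw [Linear.smul_comp, Category.id_comp, Linear.comp_smul]
    rw [pow_add, mul_smul, hw, ← h4, h1, zero_comp, comp_zero]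

end Noeth

/-! ### Boundedness -/

theorem bdd_left {G : C} (hb : ∃ N : ℤ, ∀ n : ℤ, N < |n| → ∀ f : G ⟶ G⟦n⟧, f = 0) (n : ℕ) :
    ∀ X ∈ angleN {G} n, ∃ N : ℤ, ∀ n : ℤ, N < |n| → ∀ f : X ⟶ G⟦n⟧, f = 0 := by
  apply angleN_induct G (fun X => ∃ N : ℤ, ∀ n : ℤ, N < |n| → ∀ f : X ⟶ G⟦n⟧, f = 0) hb
  · intro X hX
    exact ⟨0, fun n _ f => hX.eq_of_src _ _⟩
  · rintro X j ⟨N, hN⟩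
    refine ⟨N + |j|, fun n hn f => ?_⟩
    obtain ⟨b, rfl⟩ := exists_shift_right j f
    have h1 : b ≫ (shiftFunctorAdd C n (-j)).inv.app G = 0 := by
      apply hN
      have := abs_sub_abs_le_abs_sub n j
      rw [← sub_eq_add_neg]
      omega
    have h2 : b = 0 := by
      rw [← cancel_mono ((shiftFunctorAdd C n (-j)).inv.app G), h1, zero_comp]
    rw [h2, Functor.map_zero, zero_comp]
  · rintro X Y ⟨a, b, hab⟩ ⟨N, hN⟩
    refine ⟨N, fun n hn f => ?_⟩
    rw [← Category.id_comp f, ← hab, Category.assoc, hN n hn (b ≫ f), comp_zero]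
  · rintro T hT ⟨N1, h1⟩ ⟨N3, h3⟩
    refine ⟨max N1 N3, fun n hn f => ?_⟩
    obtain ⟨w, hw⟩ := Triangle.yoneda_exact₂ _ hT f
      (h1 n (lt_of_le_of_lt (le_max_left _ _) hn) _)
    rw [hw, h3 n (lt_of_le_of_lt (le_max_right _ _) hn) w, comp_zero]

theorem bdd_all {G : C} (hb : ∃ N : ℤ, ∀ n : ℤ, N < |n| → ∀ f : G ⟶ G⟦n⟧, f = 0) (n : ℕ)
    (hn : angleN {G} n = Set.univ) (H : C) :
    ∃ N : ℤ, ∀ n : ℤ, N < |n| → ∀ f : H ⟶ H⟦n⟧, f = 0 := by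
  have h0 : ∀ X : C, X ∈ angleN {G} n := fun X => by rw [hn]; trivial
  have h : ∀ Y ∈ angleN {G} n, ∃ N : ℤ, ∀ n : ℤ, N < |n| → ∀ f : H⟦n⟧ ⟶ Y, f = 0 := by
    apply angleN_induct G (fun Y => ∃ N : ℤ, ∀ n : ℤ, N < |n| → ∀ f : H⟦n⟧ ⟶ Y, f = 0)
    · obtain ⟨N, hN⟩ := bdd_left hb n H (h0 H)
      refine ⟨N, fun n hn f => ?_⟩
      obtain ⟨b, rfl⟩ := exists_shift_right n f
      rw [hN (-n) (by rwa [abs_neg]) b, Functor.map_zero, zero_comp]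
    · intro X hX
      exact ⟨0, fun n _ f => hX.eq_of_tgt _ _⟩
    · rintro X j ⟨N, hN⟩
      refine ⟨N + |j|, fun n hn f => ?_⟩
      obtain ⟨b, rfl⟩ := exists_shift_left j f
      have h1 : (shiftFunctorAdd C n (-j)).hom.app H ≫ b = 0 := by
        apply hN
        have := abs_sub_abs_le_abs_sub n j
        rw [← sub_eq_add_neg]
        omega
      have h2 : b = 0 := by
        rw [← cancel_epi ((shiftFunctorAdd C n (-j)).hom.app H), h1, comp_zero]
      rw [h2, Functor.map_zero, comp_zero]
    · rintro X Y ⟨a, b, hab⟩ ⟨N, hN⟩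
      refine ⟨N, fun n hn f => ?_⟩
      rw [← Category.comp_id f, ← hab, ← Category.assoc, hN n hn (f ≫ a), zero_comp]
    · rintro T hT ⟨N1, h1⟩ ⟨N3, h3⟩
      refine ⟨max N1 N3, fun n hn f => ?_⟩
      obtain ⟨w, hw⟩ := Triangle.coyoneda_exact₂ _ hT f
        (h3 n (lt_of_le_of_lt (le_max_right _ _) hn) _)
      rw [hw, h1 n (lt_of_le_of_lt (le_max_left _ _) hn) w, zero_comp]
  obtain ⟨N, hN⟩ := h H (h0 H)
  refine ⟨N, fun n hn f => ?_⟩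
  obtain ⟨b, rfl⟩ := exists_shift_left n f
  rw [hN (-n) (by rwa [abs_neg]) b, Functor.map_zero, comp_zero]

/-! ### Periodicity -/

theorem periodic (m : ℕ) (hgr : Nonempty (shiftFunctor C (m : ℤ) ≅ 𝟭 C)) (X : C) (n n' : ℤ)
    (h : (m : ℤ) ∣ n' - n) : Nonempty (X⟦n⟧ ≅ X⟦n'⟧) := by
  obtain ⟨e⟩ := hgr
  have h1 : ∀ a : ℤ, Nonempty (X⟦a⟧ ≅ X⟦a + m⟧) := fun a =>
    ⟨(e.app (X⟦a⟧)).symm ≪≫ (shiftFunctorAdd C a (m : ℤ)).symm.app X⟩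
  have h2 : ∀ j : ℤ, Nonempty (X⟦n⟧ ≅ X⟦n + m * j⟧) := by
    intro j
    induction j using Int.induction_on with
    | zero => rw [mul_zero, add_zero]; exact ⟨Iso.refl _⟩
    | succ i ih =>
      obtain ⟨e1⟩ := ih
      obtain ⟨e2⟩ := h1 (n + m * i)
      rw [mul_add, mul_one, ← add_assoc]
      exact ⟨e1 ≪≫ e2⟩
    | pred i ih =>
      obtain ⟨e1⟩ := ih
      obtain ⟨e2⟩ := h1 (n + m * (-i - 1))
      have : n + m * (-i - 1) + m = n + (m : ℤ) * (-i) := by ring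
      rw [this] at e2
      exact ⟨e1 ≪≫ e2.symm⟩
  obtain ⟨j, hj⟩ := h
  have : n' = n + m * j := by omega
  rw [this]
  exact h2 j

/-! ### Direct sums -/

theorem directSum_noeth {ι : Type*} [DecidableEq ι] (M : ι → Type*) [∀ i, AddCommGroup (M i)]
    [∀ i, Module R (M i)] (h : IsNoetherian R (⨁ i, M i)) (i : ι) : IsNoetherian R (M i) := by
  apply isNoetherian_of_surjective (M := ⨁ i, M i) (DirectSum.component R ι M i)
  rw [LinearMap.range_eq_top]
  intro x
  exact ⟨DirectSum.lof R ι M i x, DirectSum.component.lof_self R i x⟩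

theorem directSum_bdd {ι : Type*} [DecidableEq ι] (M : ι → Type*) [∀ i, AddCommGroup (M i)]
    [∀ i, Module R (M i)] (h : IsNoetherian R (⨁ i, M i)) :
    ∃ T : Finset ι, ∀ i ∉ T, ∀ x : M i, x = 0 := by
  classical
  obtain ⟨S, hS⟩ := (h.noetherian ⊤)
  refine ⟨S.biUnion fun s => DFinsupp.support s, fun i hi x => ?_⟩
  have h1 : (⊤ : Submodule R (⨁ i, M i)) ≤ LinearMap.ker (DirectSum.component R ι M i) := by
    rw [← hS, Submodule.span_le]
    intro s hs
    by_contra h2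
    apply hi
    rw [Finset.mem_biUnion]
    exact ⟨s, hs, DFinsupp.mem_support_iff.mpr h2⟩
  have h2 := h1 (trivial : DirectSum.lof R ι M i x ∈ ⊤)
  rw [LinearMap.mem_ker, DirectSum.component.lof_self] at h2
  exact h2

/-! ### The linear structure of a central action -/

/-- A central action gives a linear structure. -/
abbrev CentralAction.linear (A : CentralAction (C := C) R) : Linear R C where
  homModule X Y := A.homModule X Y
  smul_comp X Y Z r f g := by
    change (f ≫ A.φ Y r) ≫ g = (f ≫ g) ≫ A.φ Z r
    rw [Category.assoc, A.natural, Category.assoc]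
  comp_smul X Y Z f r g := by
    change f ≫ (g ≫ A.φ Z r) = (f ≫ g) ≫ A.φ Z r
    rw [Category.assoc]

theorem CentralAction.linear_smul (A : CentralAction (C := C) R) {X Y : C} (r : R) (f : X ⟶ Y) :
    letI := A.linear
    r • f = f ≫ A.φ Y r := rfl

theorem CentralAction.linear_shift (A : CentralAction (C := C) R) (n : ℤ) :
    letI := A.linear
    (shiftFunctor C n).Linear R := by
  letI := A.linear
  refine ⟨fun {X Y} f r => ?_⟩
  rw [A.linear_smul, A.linear_smul, Functor.map_comp, A.shift_comm]

/-- Restriction of a central action. -/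
def CentralAction.restrict {P : Type*} [CommRing P] (A : CentralAction (C := C) R)
    (f : P →+* R) : CentralAction (C := C) P where
  φ K := (A.φ K).comp f
  natural h r := A.natural h (f r)
  shift_comm K r n := A.shift_comm K (f r) n

theorem bound (k : Type*) [Field k] [Algebra k R] [Algebra.FiniteType k R]
    (A : CentralAction (C := C) R) (m : ℕ)
    (hgr : Nonempty (shiftFunctor C (m : ℤ) ≅ 𝟭 C))
    (G : C) (hG : IsSplitGenerator G)
    (hN : IsNoetherian R (A.HomBullet m G G)) (n : ℕ) (H : C)
    (hH : angleN {H} (n + 1) = Set.univ) :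
    ringKrullDim (R ⧸ Module.annihilator R (A.HomBullet m G G)) ≤ (n : WithBot ℕ∞) := by
  letI := A.linear
  haveI := A.linear_shift
  obtain ⟨nG, hnG⟩ := hG
  have hN' : IsNoetherian R (⨁ i : ZMod m, (G ⟶ G⟦(ZMod.cast i : ℤ)⟧)) := hN
  have hcast : ∀ n : ℤ, (m : ℤ) ∣ n - (ZMod.cast (n : ZMod m) : ℤ) := by
    intro n
    rw [← ZMod.intCast_eq_intCast_iff_dvd_sub, ZMod.intCast_cast, ZMod.cast_id]
  have hb : ∀ n : ℤ, IsNoetherian R (G ⟶ G⟦n⟧) := by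
    intro n
    obtain ⟨e⟩ := periodic m hgr G _ _ (hcast n)
    have := directSum_noeth _ hN' (n : ZMod m)
    exact isNoetherian_of_linearEquiv (Linear.homCongr R (Iso.refl G) e)
  have hall := noeth_all hb nG hnG
  have hper : ∃ F : Finset ℤ, ∀ n : ℤ, (∀ f : H ⟶ H⟦n⟧, f = 0) ∨
      ∃ n' ∈ F, Nonempty (H⟦n⟧ ≅ H⟦n'⟧) := by
    rcases Nat.eq_zero_or_pos m with rfl | hm
    · obtain ⟨T, hT⟩ := directSum_bdd _ hN'
      have : ∃ N : ℤ, ∀ n : ℤ, N < |n| → ∀ f : G ⟶ G⟦n⟧, f = 0 := by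
        refine ⟨∑ t ∈ (T : Finset ℤ), |t|, fun n hn f => hT n (fun hnT => ?_) f⟩
        have := Finset.single_le_sum (f := fun t : ℤ => |t|) (fun i _ => abs_nonneg i) hnT
        exact absurd (lt_of_le_of_lt this hn) (lt_irrefl _)
      obtain ⟨N, hN⟩ := bdd_all this nG hnG H
      refine ⟨Finset.Icc (-N) N, fun n => ?_⟩
      by_cases h : N < |n|
      · exact Or.inl (hN n h)
      · refine Or.inr ⟨n, ?_, ⟨Iso.refl _⟩⟩
        rw [Finset.mem_Icc, ← abs_le]
        exact not_lt.mp h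
    · refine ⟨Finset.Ico 0 (m : ℤ), fun n => Or.inr ⟨n % m, ?_, ?_⟩⟩
      · rw [Finset.mem_Ico]
        exact ⟨Int.emod_nonneg _ (by omega), Int.emod_lt_of_pos _ (by omega)⟩
      · apply periodic m hgr
        exact ⟨-(n / m), by have := Int.emod_add_mul_ediv n m; linarith⟩
  let J : Ideal R := RingHom.ker (A.φ H)
  have hJ : ∀ r, r ∈ J ↔ r • 𝟙 H = 0 := by
    intro r
    rw [A.linear_smul, Category.id_comp]
    exact RingHom.mem_ker
  have hJI : J ≤ (Module.annihilator R (A.HomBullet m G G)).radical := by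
    intro r hr
    obtain ⟨e, he⟩ := nilp_all ((hJ r).mp hr) (n + 1) G (by rw [hH]; trivial)
    refine ⟨e, ?_⟩
    rw [Module.mem_annihilator]
    have : ∀ x : (⨁ i : ZMod m, (G ⟶ G⟦(ZMod.cast i : ℤ)⟧)), r ^ e • x = 0 := by
      intro x
      refine DFinsupp.ext fun i => ?_
      have h1 : r ^ e • (x i) = 0 := by
        rw [← Category.id_comp (x i), ← Linear.smul_comp, he, zero_comp]
      exact h1
    exact this
  refine (ringKrullDim_quotient_mono hJI).trans ?_
  by_cases hJT : J = ⊤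
  · have : Subsingleton (R ⧸ J) := Ideal.Quotient.subsingleton_iff.mpr hJT
    rw [ringKrullDim_eq_bot_of_subsingleton]
    exact bot_le
  obtain ⟨d, f, hd, hf0, hfin⟩ := noether_setup k R J hJT
  let A' := A.restrict f
  letI := A'.linear
  haveI := A'.linear_shift
  have hsm : ∀ {X Y : C} (p : MvPolynomial (Fin d) k) (a : X ⟶ Y), p • a = f p • a :=
    fun p a => rfl
  have hlt : d < n + 1 := by
    refine core (k := k) (d := d) H (fun j => ?_) hper (fun p hp => ?_) (n + 1) hH
    · have := hall H (H⟦j⟧)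
      refine finite_restrict f hsm J (fun r hr a => ?_) hfin
      rw [← Category.id_comp a, ← Linear.smul_comp, (hJ r).mp hr, zero_comp]
    · apply hf0
      rw [hJ, ← hsm, hp]
  refine hd.trans ?_
  exact_mod_cast Nat.lt_succ_iff.mp hlt


/-- Let `C` be a `ℤ/m`-graded triangulated category (`1 ≤ m ≤ ∞`; here
`m = 0` encodes `m = ∞`), `k` a field, and `R` a commutative `k`-algebra of finite type
acting centrally on `C`. If there is a split-generator `G` of `C` such that `Hom^•(G, G)`
is a Noetherian `R`-module, then `rdim C ≥ dim_R Hom^•(G, G)`, the Krull dimension of the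
`R`-module `Hom^•(G, G)`. -/
theorem krullDim_le_rouquierDim
    (k : Type*) [Field k] [Algebra k R] [Algebra.FiniteType k R]
    (A : CentralAction (C := C) R) (m : ℕ)
    (hgr : Nonempty (shiftFunctor C (m : ℤ) ≅ 𝟭 C))
    (G : C) (hG : IsSplitGenerator G)
    (hN : IsNoetherian R (A.HomBullet m G G)) :
    ringKrullDim (R ⧸ Module.annihilator R (A.HomBullet m G G))
      ≤ (rouquierDim C : WithBot ℕ∞) := by
  have key := bound k A m hgr G hG hN
  generalize ringKrullDim (R ⧸ Module.annihilator R (A.HomBullet m G G)) = D at key ⊢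
  induction D using WithBot.recBotCoe with
  | bot => exact bot_le
  | coe D =>
    rw [WithBot.coe_le_coe]
    refine le_sInf ?_
    rintro _ ⟨n, rfl, H, hH⟩
    exact WithBot.coe_le_coe.mp (key n H hH)

end RouquierDim
end

section
/- Let R be an algebra of finite type over a field k which is equidimensional, i.e. dim(R/𝔭) = dim R for every minimal prime 𝔭 of R. Let 𝔭 be a minimal prime of R and let f ∈ R with f ∉ 𝔭. Then the Krull dimension of R equals the Krull dimension of the localization R_f of R away from f. -/
theorem krullDim_integral_aux (A B : Type*) [CommRing A] [CommRing B] [Algebra A B]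
    [Algebra.IsIntegral A B] [FaithfulSMul A B] : ringKrullDim B = ringKrullDim A := by
  apply le_antisymm
  · exact Order.krullDim_le_of_strictMono (PrimeSpectrum.comap (algebraMap A B))
      (fun I J h => Ideal.IsIntegral.comap_lt_comap (R := A) h)
  · refine iSup_le fun l => ?_
    obtain ⟨Q, -, hQ, hQl⟩ := Ideal.exists_ideal_over_prime_of_isIntegral (S := B)
      (RelSeries.head l).asIdeal ⊥ (by
        rw [← RingHom.ker_eq_comap_bot,
          (RingHom.injective_iff_ker_eq_bot _).mp (FaithfulSMul.algebraMap_injective A B)]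
        exact bot_le)
    have : Q.LiesOver (RelSeries.head l).asIdeal := ⟨hQl.symm⟩
    have : Algebra.HasGoingUp A B := inferInstance
    obtain ⟨L, hL, -⟩ := Ideal.exists_ltSeries_of_hasGoingUp l Q
    rw [← hL]
    exact le_iSup (fun L : LTSeries (PrimeSpectrum B) => ((L.length : ℕ∞) : WithBot ℕ∞)) L

theorem krullDim_trdeg_aux (k A : Type*) [Field k] [CommRing A] [IsDomain A] [Algebra k A]
    [Algebra.FiniteType k A] :
    ∃ n : ℕ, Algebra.trdeg k A = n ∧ ringKrullDim A = n := by
  obtain ⟨s, g, hg, hi⟩ := exists_integral_inj_algHom_of_fg k A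
  refine ⟨s, ?_, ?_⟩
  · algebraize [g.toRingHom]
    have : FaithfulSMul (MvPolynomial (Fin s) k) A :=
      (faithfulSMul_iff_algebraMap_injective _ _).mpr hg
    have : Algebra.IsIntegral (MvPolynomial (Fin s) k) A := ⟨hi⟩
    have h := lift_trdeg_add_eq k (MvPolynomial (Fin s) k) A
    rw [trdeg_eq_zero (R := MvPolynomial (Fin s) k)] at h
    simp at h
    exact_mod_cast Eq.symm h
  · algebraize [g.toRingHom]
    have : FaithfulSMul (MvPolynomial (Fin s) k) A :=
      (faithfulSMul_iff_algebraMap_injective _ _).mpr hg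
    have : Algebra.IsIntegral (MvPolynomial (Fin s) k) A := ⟨hi⟩
    rw [krullDim_integral_aux (MvPolynomial (Fin s) k) A]
    simp [ringKrullDim_eq_zero_of_field]

theorem krullDim_away_domain_aux (k A : Type*) [Field k] [CommRing A] [IsDomain A] [Algebra k A]
    [Algebra.FiniteType k A] (f : A) (hf : f ≠ 0) :
    ringKrullDim (Localization.Away f) = ringKrullDim A := by
  have hM : Submonoid.powers f ≤ nonZeroDivisors A := powers_le_nonZeroDivisors_of_noZeroDivisors hf
  have : IsDomain (Localization.Away f) := IsLocalization.isDomain_localization hM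
  have : FaithfulSMul A (Localization.Away f) :=
    (faithfulSMul_iff_algebraMap_injective _ _).mpr (IsLocalization.injective _ hM)
  have : Algebra.FiniteType A (Localization.Away f) :=
    IsLocalization.finiteType_of_monoid_fg (Submonoid.powers f) _
  have : Algebra.FiniteType k (Localization.Away f) := Algebra.FiniteType.trans (S := A) ‹_› ‹_›
  have : Algebra.IsAlgebraic A (Localization.Away f) :=
    IsLocalization.isAlgebraic _ (Submonoid.powers f)
  obtain ⟨n, hn, hn'⟩ := krullDim_trdeg_aux k A
  obtain ⟨m, hm, hm'⟩ := krullDim_trdeg_aux k (Localization.Away f)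
  have h := trdeg_add_eq k A (A := Localization.Away f)
  rw [trdeg_eq_zero (R := A), hn, hm, add_zero] at h
  rw [hn', hm']
  have : n = m := by exact_mod_cast h
  rw [this]

/-- Let `R` be an equidimensional algebra of finite type over a field `k`,
let `𝔭` be a minimal prime of `R` and `f ∈ R` with `f ∉ 𝔭`. Then the Krull dimension of `R`
equals the Krull dimension of the localization `R_f`. -/
theorem ringKrullDim_eq_ringKrullDim_away
    (k R : Type*) [Field k] [CommRing R] [Algebra k R] [Algebra.FiniteType k R]
    (hequi : ∀ q ∈ minimalPrimes R, ringKrullDim (R ⧸ q) = ringKrullDim R)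
    (p : Ideal R) (hp : p ∈ minimalPrimes R) (f : R) (hf : f ∉ p) :
    ringKrullDim R = ringKrullDim (Localization.Away f) := by
  apply le_antisymm
  · have : p.IsPrime := hp.1.1
    have hf' : Ideal.Quotient.mk p f ≠ 0 := by
      rwa [Ne, Ideal.Quotient.eq_zero_iff_mem]
    rw [← hequi p hp, ← krullDim_away_domain_aux k (R ⧸ p) (Ideal.Quotient.mk p f) hf']
    refine ringKrullDim_le_of_surjective
      (Localization.awayMap (Ideal.Quotient.mk p) f) ?_
    exact Localization.awayMap_surjective_iff.mpr fun a => by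
      obtain ⟨b, rfl⟩ := Ideal.Quotient.mk_surjective a
      exact ⟨b, 0, by simp⟩
  · exact Order.krullDim_le_of_strictMono
      (PrimeSpectrum.comap (algebraMap R (Localization.Away f)))
      (Monotone.strictMono_of_injective (fun I J h => Ideal.comap_mono h)
        (PrimeSpectrum.localization_comap_injective _ (Submonoid.powers f)))
end

section
/- Let R be an algebra of finite type over a field k and let M be a finitely generated R-module of Krull dimension c ≥ 0. Then there exists an M-regular sequence x_1, …, x_c of elements of R of length c. -/
open RingTheory.Sequence in
theorem aux_exists_irreducible {K S : Type*} [Field K] [CommRing S]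
    (φ : Polynomial K →+* S) (A : Set (Ideal S)) (hA : A.Finite)
    (hp : ∀ q ∈ A, q.IsPrime) :
    ∃ g : Polynomial K, Irreducible g ∧ ∀ q ∈ A, φ g ∉ q := by
  classical
  have hex : ∀ q : Ideal S, ∃ h : Polynomial K, h ≠ 0 ∧ (q.comap φ ≠ ⊥ → h ∈ q.comap φ) := by
    intro q
    by_cases hq : q.comap φ = ⊥
    · exact ⟨1, one_ne_zero, fun h => absurd hq h⟩
    · obtain ⟨h, hm, h0⟩ := Submodule.exists_mem_ne_zero_of_ne_bot hq
      exact ⟨h, h0, fun _ => hm⟩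
  choose h h0 hm using hex
  set H := ∏ q ∈ hA.toFinset, h q with hH
  have H0 : H ≠ 0 := Finset.prod_ne_zero_iff.mpr fun q _ => h0 q
  have hdeg : 0 < (H * Polynomial.X + Polynomial.C 1).degree := by
    rw [Polynomial.degree_add_C]
    · rw [Polynomial.degree_mul, Polynomial.degree_X, Polynomial.degree_eq_natDegree H0]
      norm_cast; omega
    · rw [Polynomial.degree_mul, Polynomial.degree_X, Polynomial.degree_eq_natDegree H0]
      norm_cast; omega
  have hnu : ¬ IsUnit (H * Polynomial.X + Polynomial.C 1) := fun hu => by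
    rw [Polynomial.degree_eq_zero_of_isUnit hu] at hdeg
    exact lt_irrefl _ hdeg
  have hn0 : (H * Polynomial.X + Polynomial.C 1) ≠ 0 := fun h => by
    rw [h, Polynomial.degree_zero] at hdeg
    exact not_lt_bot hdeg
  obtain ⟨g, hg, hdvd⟩ := WfDvdMonoid.exists_irreducible_factor hnu hn0
  refine ⟨g, hg, fun q hq hgq => ?_⟩
  have := hp q hq
  have hgc : g ∈ q.comap φ := hgq
  have hne : q.comap φ ≠ ⊥ := fun hb => hg.ne_zero (by simpa [hb] using hgc)
  have h1 : H ∈ q.comap φ :=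
    Ideal.mem_of_dvd _ (Finset.dvd_prod_of_mem h (hA.mem_toFinset.mpr hq)) (hm q hne)
  have h2 : (H * Polynomial.X + Polynomial.C 1) ∈ q.comap φ := Ideal.mem_of_dvd _ hdvd hgc
  have h3 : (Polynomial.C 1 : Polynomial K) ∈ q.comap φ :=
    (Ideal.add_mem_iff_right _ (Ideal.mul_mem_right _ _ h1)).mp h2
  have h4 : (1 : S) ∈ q := by simpa using h3
  exact this.ne_top ((Ideal.eq_top_iff_one _).mpr h4)

open RingTheory.Sequence in
theorem aux_poly.{u, v, w} (m : ℕ) : ∀ (n : ℕ) (_ : m ≤ n) (K : Type u) (S : Type v) (M : Type w)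
    [Field K] [CommRing S] [AddCommGroup M] [Module S M] [Module.Finite S M]
    (_ : Nonempty (S ≃+* MvPolynomial (Fin n) K)) (_ : Module.annihilator S M = ⊥),
    ∃ xs : List S, xs.length = m ∧ IsRegular M xs := by
  induction m with
  | zero =>
    intro n _ K S M _ _ _ _ _ ⟨e⟩ hann
    have : Nontrivial S := e.toEquiv.nontrivial
    have : Nontrivial M := by
      by_contra hM
      rw [not_nontrivial_iff_subsingleton] at hM
      rw [Module.annihilator_eq_top_iff.mpr hM] at hann
      exact bot_ne_top hann.symm
    exact ⟨[], rfl, IsRegular.nil S M⟩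
  | succ m ih =>
    intro n hn K S M _ _ _ _ _ ⟨e⟩ hann
    obtain ⟨n, rfl⟩ : ∃ n', n = n' + 1 := ⟨n - 1, by omega⟩
    let e' : S ≃+* MvPolynomial (Fin n) (Polynomial K) :=
      (e.trans (MvPolynomial.renameEquiv K (finSuccEquiv n)).toRingEquiv).trans
        (MvPolynomial.optionEquivRight K (Fin n)).toRingEquiv
    have : IsNoetherianRing S := isNoetherianRing_of_ringEquiv _ e'.symm
    have : IsDomain S := e'.toMulEquiv.isDomain _
    obtain ⟨g, hg, hgA⟩ := aux_exists_irreducible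
      (e'.symm.toRingHom.comp MvPolynomial.C) (associatedPrimes S M)
      (associatedPrimes.finite S M) (fun q hq => hq.isPrime)
    set x : S := e'.symm (MvPolynomial.C g) with hx
    have hreg : IsSMulRegular M x := by
      rw [isSMulRegular_iff_right_eq_zero_of_smul]
      intro y hy
      by_contra hy0
      have : x ∈ ⋃ p ∈ associatedPrimes S M, (p : Set S) := by
        rw [biUnion_associatedPrimes_eq_zero_divisors]
        exact ⟨y, hy0, hy⟩
      simp only [Set.mem_iUnion] at this
      obtain ⟨p, hp, hxp⟩ := this
      exact hgA p hp hxp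
    have : Fact (Irreducible g) := ⟨hg⟩
    have hmax : (Ideal.span {g}).IsMaximal :=
      PrincipalIdealRing.isMaximal_of_irreducible hg
    letI : Field (Polynomial K ⧸ Ideal.span {g}) := Ideal.Quotient.field _
    have hmap : Ideal.map (MvPolynomial.C : _ →+* MvPolynomial (Fin n) (Polynomial K))
        (Ideal.span {g}) = Ideal.map (e' : S →+* _) (Ideal.span {x}) := by
      rw [Ideal.map_span, Ideal.map_span]
      simp [hx]
    let e2 : (S ⧸ Ideal.span {x}) ≃+* MvPolynomial (Fin n) (Polynomial K ⧸ Ideal.span {g}) :=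
      (Ideal.quotientEquiv _ _ e' hmap).trans
        (MvPolynomial.quotientEquivQuotientMvPolynomial (Ideal.span {g})).symm.toRingEquiv
    have hdom : IsDomain (S ⧸ Ideal.span {x}) := e2.toMulEquiv.isDomain _
    have hxp : (Ideal.span {x}).IsPrime := (Ideal.Quotient.isDomain_iff_prime _).mp hdom
    have hle : Module.annihilator S (QuotSMulTop x M) ≤ Ideal.span {x} := by
      have : (⟨Ideal.span {x}, hxp⟩ : PrimeSpectrum S) ∈
          Module.support S (QuotSMulTop x M) := by
        rw [Module.support_quotSMulTop]
        refine ⟨Module.mem_support_iff_of_finite.mpr (by rw [hann]; exact bot_le), ?_⟩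
        simp [Ideal.mem_span_singleton_self]
      exact Module.mem_support_iff_of_finite.mp this
    have : Module.Finite (S ⧸ Ideal.span {x}) (QuotSMulTop x M) :=
      Module.Finite.of_restrictScalars_finite S _ _
    have hann2 : Module.annihilator (S ⧸ Ideal.span {x}) (QuotSMulTop x M) = ⊥ := by
      rw [eq_bot_iff]
      intro s hs
      obtain ⟨s, rfl⟩ := Ideal.Quotient.mk_surjective s
      refine Ideal.Quotient.eq_zero_iff_mem.mpr (hle ?_)
      rw [Module.mem_annihilator] at hs ⊢
      intro y
      rw [← hs y]
      exact (algebraMap_smul (S ⧸ Ideal.span {x}) s y).symm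
    obtain ⟨ys, hlen, hys⟩ := ih n (by omega) (Polynomial K ⧸ Ideal.span {g})
      (S ⧸ Ideal.span {x}) (QuotSMulTop x M) ⟨e2⟩ hann2
    obtain ⟨xs, rfl⟩ := List.map_surjective_iff.mpr
      (Ideal.Quotient.mk_surjective (I := Ideal.span {x})) ys
    exact ⟨x :: xs, by simpa using hlen, IsRegular.cons' hreg hys⟩

/-- Let `R` be an algebra of finite type over a field `k` and let `M` be a
finitely generated `R`-module of Krull dimension `c ≥ 0`. Then there exists an `M`-regular
sequence of elements of `R` of length `c`. -/
theorem exists_regular_sequence_of_length_krullDim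
    (k R M : Type*) [Field k] [CommRing R] [Algebra k R] [Algebra.FiniteType k R]
    [AddCommGroup M] [Module R M] [Module.Finite R M]
    (c : ℕ) (hdim : ringKrullDim (R ⧸ Module.annihilator R M) = c) :
    ∃ xs : List R, xs.length = c ∧ RingTheory.Sequence.IsRegular M xs := by
  have hnt : Nontrivial (R ⧸ Module.annihilator R M) := by
    by_contra h
    rw [not_nontrivial_iff_subsingleton] at h
    rw [ringKrullDim_eq_bot_of_subsingleton] at hdim
    exact absurd hdim.symm (WithBot.coe_ne_bot)
  obtain ⟨s, g, hinj, hfin⟩ := exists_finite_inj_algHom_of_fg k (R ⧸ Module.annihilator R M)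
  letI : Algebra (MvPolynomial (Fin s) k) (R ⧸ Module.annihilator R M) := g.toRingHom.toAlgebra
  have : Module.Finite (MvPolynomial (Fin s) k) (R ⧸ Module.annihilator R M) := hfin
  have hcs : c ≤ s := by
    have h1 : ringKrullDim (R ⧸ Module.annihilator R M) ≤ ringKrullDim (MvPolynomial (Fin s) k) := by
      refine Order.krullDim_le_of_strictMono
        (PrimeSpectrum.comap (algebraMap (MvPolynomial (Fin s) k) (R ⧸ Module.annihilator R M))) ?_
      intro p q hpq
      obtain ⟨hle, x, hxq, hxp⟩ := SetLike.lt_iff_le_and_exists.mp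
        (show p.asIdeal < q.asIdeal from hpq)
      exact Ideal.comap_lt_comap_of_integral_mem_sdiff hle ⟨hxq, hxp⟩
        (Algebra.IsIntegral.isIntegral x)
    rw [hdim, MvPolynomial.ringKrullDim_of_isNoetherianRing, ringKrullDim_eq_zero_of_field,
      zero_add, Nat.card_fin] at h1
    exact_mod_cast h1
  letI : Module (R ⧸ Module.annihilator R M) M := Module.quotientAnnihilator
  have hsm : ∀ (r : R) (y : M), (Ideal.Quotient.mk (Module.annihilator R M) r) • y = r • y :=
    fun r y => rfl
  have : IsScalarTower R (R ⧸ Module.annihilator R M) M := ⟨fun a b y => by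
    obtain ⟨b, rfl⟩ := Ideal.Quotient.mk_surjective b
    rw [hsm, ← mul_smul, ← hsm]; rfl⟩
  have : Module.Finite (R ⧸ Module.annihilator R M) M := Module.Finite.of_restrictScalars_finite R _ _
  letI : Module (MvPolynomial (Fin s) k) M := Module.compHom M g.toRingHom
  have hsm2 : ∀ (f : MvPolynomial (Fin s) k) (y : M), f • y = g f • y := fun _ _ => rfl
  have : IsScalarTower (MvPolynomial (Fin s) k) (R ⧸ Module.annihilator R M) M :=
    ⟨fun a b y => by rw [hsm2, ← mul_smul]; rfl⟩
  have : Module.Finite (MvPolynomial (Fin s) k) M :=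
    Module.Finite.trans (R ⧸ Module.annihilator R M) M
  have hann : Module.annihilator (MvPolynomial (Fin s) k) M = ⊥ := by
    rw [eq_bot_iff]
    intro f hf
    rw [Module.mem_annihilator] at hf
    obtain ⟨r, hr⟩ := Ideal.Quotient.mk_surjective (g f)
    have : r ∈ Module.annihilator R M := by
      rw [Module.mem_annihilator]
      intro y
      rw [← hsm, hr, ← hsm2, hf]
    rw [← Ideal.Quotient.eq_zero_iff_mem, hr] at this
    exact hinj (by rw [this, map_zero])
  obtain ⟨xs, hlen, hreg⟩ := aux_poly c s hcs k (MvPolynomial (Fin s) k) M ⟨RingEquiv.refl _⟩ hann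
  choose σ hσ using fun f => Ideal.Quotient.mk_surjective (I := Module.annihilator R M) (g f)
  refine ⟨xs.map σ, by simpa using hlen, ?_⟩
  refine ((AddEquiv.refl M).isRegular_congr ?_).mp hreg
  refine List.forall₂_map_right_iff.mpr (List.forall₂_same.mpr fun f _ y => ?_)
  change f • y = σ f • y
  rw [hsm2, ← hσ, hsm]
end
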